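/- Let s, α ∈ ℕ with α ≥ 3, let β, g ∈ ℕ with β ≥ 2α, g ≥ 2αs and g ≥ ⌊s(β−1)/2⌋, and let b ≥ βgs be a prime. Then there exists a constant A > 0 (depending only on α, β, b, s) such that for every w ∈ ℕ, the digital net P ⊂ [0,1)^s of the paper's construction, of cardinality N = b^{gw}, satisfies ∑_{k ∈ ℕ₀^s \ {0,...,b^{βgw}−1}^s} ∑_{l ∈ P∞⊥ \ {0}} |K̂_{α,s}(k,l)| ≤ A · (log N)^{sα} / N^{3α}. -/

import Mathlib

/-!
The double sum factorizes up to a constant, because the Walsh coefficients satisfy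
`|K̂_{α,s}(k,l)| ≤ D · b^{-μ_α(k)} · b^{-μ_α(l)}` (`norm_KhatS_le`).

*Decay of the coefficients.* Integrating a Walsh function `wal_k` once removes the leading digit of
`k` and gains a factor `b^{-a_1+1}` (`walsh_step`), so that `min(v, α)` integrations gain
`b^{-μ_α(k)}` up to a constant, with vanishing boundary values (`decay_walsh`). The kernel `K_α` is
a polynomial in `x, y` plus a multiple of the truncated power `max(x-y,0)^{2α-1}`. Integration
against a polynomial is handled by integration by parts, and integration against the truncated
power is a `2α`-fold antiderivative, of which up to `α` integrations are moved to the other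
factor (`Good.trunc`).

*Sum over `k`.* Splitting off leading digits gives a recursion for `∑_{k < b^n} b^{-μ_α(k)}`; for
`α ≥ 2` these sums are bounded, and for `α ≥ 3` the frequencies outside the box of side `b^{βm}`,
`m = gw`, contribute `O(b^{-βm})`, which is `O(b^{-2αm})` (`k_sum`).

*Sum over `l`.* The rows of the Chen–Skriganov matrices evaluate Hasse derivatives at distinct nodes,
so the first `H_i` rows of the `i`-th matrix are jointly independent whenever `∑ H_i ≤ m`
(`rows_indep`, Hermite interpolation). Through the interlacing this has two consequences. Every
nonzero dual element satisfies `μ_α(l) ≥ αm - O(1)` (`dual_dick_ge`). Every `b^{F_1} × ⋯ × b^{F_s}`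
elementary box contains at most `b^{(∑F_j - m)_+}` dual elements (`dual_count`). Fixing the `α`
leading digits of each coordinate and letting `F_j` be the position of the last fixed digit, the
group of dual elements with these leading digits contributes at most `b^{-W}`, where
`W = μ_α - (∑F_j - m)_+ ≥ αm - O(1)`, and there are `O(W^{sα})` groups with a given `W`. Summing
gives `O(m^{sα} b^{-αm})` (`l_sum`).
-/

open scoped BigOperators

/-- The `i`-th digit (starting from `i = 0`) of the `b`-adic expansion of `k`. -/
def bdigit (b k i : ℕ) : ℕ := k / b ^ i % b

/-- The set of indices of nonzero `b`-adic digits of `k`. -/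
def bsupp (b k : ℕ) : Finset ℕ := (Finset.range (k + 1)).filter fun i => bdigit b k i ≠ 0

/-- The Hamming metric `κ(k)`: the number of nonzero `b`-adic digits of `k`. -/
def hamming (b k : ℕ) : ℕ := (bsupp b k).card

/-- The Dick metric `μ_α(k)`: the sum of the `min(v, α)` largest exponents-plus-one
`a_1 > a_2 > ⋯` of the nonzero `b`-adic digits of `k`. -/
def dick (b α k : ℕ) : ℕ := ((((bsupp b k).sort (· ≤ ·)).reverse.take α).map (· + 1)).sum

/-- Digitwise addition `k ⊕ l` modulo `b` of the `b`-adic digits. -/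
def dadd (b k l : ℕ) : ℕ :=
  ∑ i ∈ Finset.range (k + l + 1), (bdigit b k i + bdigit b l i) % b * b ^ i

/-- Digitwise subtraction `k ⊖ l` modulo `b` of the `b`-adic digits. -/
def dsub (b k l : ℕ) : ℕ :=
  ∑ i ∈ Finset.range (k + l + 1), (bdigit b k i + (b - bdigit b l i)) % b * b ^ i

/-- Hamming metric of a vector: sum over coordinates. -/
def hammingVec (b : ℕ) {s : ℕ} (k : Fin s → ℕ) : ℕ := ∑ j, hamming b (k j)

/-- Dick metric of a vector: sum over coordinates. -/
def dickVec (b α : ℕ) {s : ℕ} (k : Fin s → ℕ) : ℕ := ∑ j, dick b α (k j)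

/-- The column vector of the first `n` `b`-adic digits of `k`, as a vector over `F_b = ZMod b`. -/
def trv (b n : ℕ) (k : ℕ) : Fin n → ZMod b := fun i => (bdigit b k i.1 : ZMod b)

/-- The dual net `P⊥` of the digital net with generating matrices `C`. -/
def dualNet (b : ℕ) {s n m : ℕ} (C : Fin s → Matrix (Fin n) (Fin m) (ZMod b)) :
    Set (Fin s → ℕ) :=
  {k | (∀ j, k j < b ^ n) ∧ ∑ j, ((C j).transpose).mulVec (trv b n (k j)) = 0}

/-- The dual net `P∞⊥` of the digital net with generating matrices `C` (no upper bound
on the components of `k`). -/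
def dualNetInf (b : ℕ) {s n m : ℕ} (C : Fin s → Matrix (Fin n) (Fin m) (ZMod b)) :
    Set (Fin s → ℕ) :=
  {k | ∑ j, ((C j).transpose).mulVec (trv b n (k j)) = 0}

/-- The `h`-th point of the digital net generated by the matrices `C` over `ZMod b`:
its `j`-th coordinate is `∑_{i=1}^n ξ_i b^{-i}` with `(ξ_1,…,ξ_n)ᵀ = C_j · (η_0,…,η_{m-1})ᵀ`,
where `η` are the `b`-adic digits of `h`. -/
noncomputable def netPoint (b : ℕ) {s n m : ℕ} (C : Fin s → Matrix (Fin n) (Fin m) (ZMod b))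
    (h : ℕ) : Fin s → ℝ :=
  fun j => ∑ i : Fin n,
    (((C j).mulVec (fun v : Fin m => (bdigit b h v.1 : ZMod b)) i).val : ℝ) / (b : ℝ) ^ (i.1 + 1)

/-- Sum of the `α` largest elements of a finite set of (0-based) row indices, counted
1-based, i.e. each index `i` contributes `i + 1`. -/
def topSum (α : ℕ) (R : Finset ℕ) : ℕ := (((R.sort (· ≤ ·)).reverse.take α).map (· + 1)).sum

/-- The digital net with generating matrices `C_1,…,C_s ∈ F_b^{n×m}` is an order `α`
digital `(t,m,s)`-net: for every choice of rows `i_{j,v_j} < ⋯ < i_{j,1}` from each `C_j`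
such that the 1-based indices of the `min(α, v_j)` largest chosen rows of each matrix sum
to at most `αm - t`, the chosen rows are linearly independent over `F_b`. -/
def isOrderNet (b α t m : ℕ) {s n : ℕ} (C : Fin s → Matrix (Fin n) (Fin m) (ZMod b)) : Prop :=
  ∀ R : Fin s → Finset (Fin n),
    (∑ j, topSum α ((R j).image Fin.val)) ≤ α * m - t →
    LinearIndependent (ZMod b) fun p : Σ j : Fin s, {i : Fin n // i ∈ R j} => C p.1 p.2.1

/-- The minimum Dick metric `μ_α(P)` of the digital net with generating matrices `C`,
namely the minimum of `μ_α(k)` over nonzero elements `k` of the dual net. -/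
noncomputable def minDick (b α : ℕ) {s n m : ℕ}
    (C : Fin s → Matrix (Fin n) (Fin m) (ZMod b)) : ℕ :=
  sInf (dickVec b α '' {k | k ∈ dualNet b C ∧ k ≠ 0})

/-- The minimum Hamming metric `κ(P)` of the digital net with generating matrices `C`. -/
noncomputable def minHamming (b : ℕ) {s n m : ℕ}
    (C : Fin s → Matrix (Fin n) (Fin m) (ZMod b)) : ℕ :=
  sInf (hammingVec b '' {k | k ∈ dualNet b C ∧ k ≠ 0})

/-- The Chen–Skriganov generating matrix (for one coordinate `j`, with row parameters
`βr l = β_{j,l}`): the entry in (1-based) row `u = (l-1)w + i` and column `v` is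
`binom(v-1, i-1) · β_{j,l}^{v-i}` (which vanishes when `v < i` since the binomial
coefficient is `0`). Indices here are 0-based. -/
def csMatrix (b w n : ℕ) (βr : ℕ → ZMod b) : Matrix (Fin n) (Fin n) (ZMod b) :=
  Matrix.of fun u v =>
    (Nat.choose v.1 (u.1 % w) : ZMod b) * βr (u.1 / w) ^ (v.1 - u.1 % w)

/-- Dick's digit interlacing composition with interlacing factor `α` applied to the
generating matrices `C_1,…,C_{αs} ∈ F_b^{m×m}`: the resulting matrices
`D_1,…,D_s ∈ F_b^{αm×m}` are such that the (1-based) `(α(h-1)+i)`-th row of `D_j` is the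
`h`-th row of `C_{α(j-1)+i}`. -/
def interlace {R : Type*} (α s m : ℕ) (C : Fin (α * s) → Matrix (Fin m) (Fin m) R) :
    Fin s → Matrix (Fin (α * m)) (Fin m) R :=
  fun j => Matrix.of fun r v =>
    C ⟨α * j.1 + r.1 % α, by
        have hα : 0 < α := by
          rcases Nat.eq_zero_or_pos α with h | h
          · exact absurd r.2 (by simp [h])
          · exact h
        have h1 : α * (j.1 + 1) ≤ α * s := Nat.mul_le_mul_left α j.2
        have h2 : α * (j.1 + 1) = α * j.1 + α := by ring
        have h3 : r.1 % α < α := Nat.mod_lt _ hα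
        omega⟩
      ⟨r.1 / α, by
        have hα : 0 < α := by
          rcases Nat.eq_zero_or_pos α with h | h
          · exact absurd r.2 (by simp [h])
          · exact h
        exact Nat.div_lt_of_lt_mul r.2⟩
      v

open MeasureTheory

/-- The `i`-th (for `i ≥ 1`) `b`-adic digit `ξ_i` of a real number `x ∈ [0,1)`, using the
expansion in which infinitely many digits differ from `b - 1`. -/
noncomputable def rdigit (b : ℕ) (x : ℝ) (i : ℕ) : ℤ := ⌊x * (b : ℝ) ^ i⌋ % b

/-- The `k`-th `b`-adic Walsh function, `wal_k(x) = ω_b^{κ_0 ξ_1 + κ_1 ξ_2 + ⋯}` where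
`ω_b = exp(2π√-1/b)`, `κ` are the `b`-adic digits of `k` and `ξ` those of `x`. -/
noncomputable def walsh (b k : ℕ) (x : ℝ) : ℂ :=
  Complex.exp (2 * (Real.pi : ℂ) * Complex.I / (b : ℂ) *
    ∑ a ∈ Finset.range (k + 1), (bdigit b k a : ℂ) * (rdigit b x (a + 1) : ℂ))

/-- The `k`-th `b`-adic Walsh function on `[0,1)^s`, `wal_k(x) = ∏_j wal_{k_j}(x_j)`. -/
noncomputable def walshVec (b : ℕ) {s : ℕ} (k : Fin s → ℕ) (x : Fin s → ℝ) : ℂ :=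
  ∏ j, walsh b (k j) (x j)

/-- The Bernoulli polynomial `B_r` evaluated at a real number. -/
noncomputable def bernoulliPoly (r : ℕ) (x : ℝ) : ℝ := Polynomial.aeval x (Polynomial.bernoulli r)

/-- The reproducing kernel `K_α` of the Sobolev space `H_α`:
`K_α(x,y) = ∑_{r=0}^{α} B_r(x)B_r(y)/(r!)² + (-1)^{α+1} B_{2α}(|x-y|)/(2α)!`. -/
noncomputable def Kker (α : ℕ) (x y : ℝ) : ℝ :=
  ∑ r ∈ Finset.range (α + 1), bernoulliPoly r x * bernoulliPoly r y / ((r.factorial : ℝ)) ^ 2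
    + (-1 : ℝ) ^ (α + 1) * bernoulliPoly (2 * α) |x - y| / ((2 * α).factorial : ℝ)

/-- The `(k,l)`-th Walsh coefficient of the kernel `K_α`. -/
noncomputable def Khat (b α : ℕ) (k l : ℕ) : ℂ :=
  ∫ x in Set.Ico (0 : ℝ) 1, ∫ y in Set.Ico (0 : ℝ) 1,
    (Kker α x y : ℂ) * (starRingEnd ℂ) (walsh b k x) * walsh b l y

/-- The `(k,l)`-th Walsh coefficient of the `s`-variate kernel
`K_{α,s}(x,y) = ∏_j K_α(x_j, y_j)`. -/
noncomputable def KhatS (b α s : ℕ) (k l : Fin s → ℕ) : ℂ :=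
  ∫ x in Set.univ.pi fun _ : Fin s => Set.Ico (0 : ℝ) 1,
    ∫ y in Set.univ.pi fun _ : Fin s => Set.Ico (0 : ℝ) 1,
      ((∏ j, Kker α (x j) (y j) : ℝ) : ℂ) * (starRingEnd ℂ) (walshVec b k x) * walshVec b l y

/-- The `k`-th Walsh coefficient `b̂_r(k)` of the normalized Bernoulli polynomial `B_r/r!`. -/
noncomputable def bhat (b r k : ℕ) : ℂ :=
  ∫ x in Set.Ico (0 : ℝ) 1,
    ((bernoulliPoly r x / (r.factorial : ℝ) : ℝ) : ℂ) * (starRingEnd ℂ) (walsh b k x)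

/-- The `(k,l)`-th Walsh coefficient `b̂_{r,per}(k,l)` of `(x,y) ↦ B̃_r(x-y)/r!`, where
`B̃_r` is the 1-periodic extension of the Bernoulli polynomial `B_r` from `[0,1)` to `ℝ`. -/
noncomputable def bhatPer (b r : ℕ) (k l : ℕ) : ℂ :=
  ∫ x in Set.Ico (0 : ℝ) 1, ∫ y in Set.Ico (0 : ℝ) 1,
    ((bernoulliPoly r (Int.fract (x - y)) / (r.factorial : ℝ) : ℝ) : ℂ) *
      (starRingEnd ℂ) (walsh b k x) * walsh b l y

/-! ### Digits -/

lemma bdigit_eq_zero_of_lt {b k i : ℕ} (h : k < b ^ i) : bdigit b k i = 0 := by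
  simp [bdigit, Nat.div_eq_of_lt h]

lemma mem_bsupp {b : ℕ} (hb : 2 ≤ b) (k i : ℕ) : i ∈ bsupp b k ↔ bdigit b k i ≠ 0 := by
  simp only [bsupp, Finset.mem_filter, Finset.mem_range, and_iff_right_iff_imp]
  intro h
  by_contra hlt
  exact h (bdigit_eq_zero_of_lt
    (lt_of_lt_of_le (Nat.lt_pow_self (by omega)) (Nat.pow_le_pow_right (by omega) (by omega))))

lemma bdigit_top {b n c k i : ℕ} (hb : 2 ≤ b) (hc : c < b) (hk : k < b ^ n) :
    bdigit b (c * b ^ n + k) i = if i < n then bdigit b k i else if i = n then c else 0 := by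
  have hb0 : 0 < b := by omega
  split_ifs with h1 h2
  · obtain ⟨d, rfl⟩ : ∃ d, n = i + (d + 1) := ⟨n - i - 1, by omega⟩
    have : c * b ^ (i + (d + 1)) + k = k + b ^ i * (b * (c * b ^ d)) := by ring
    rw [bdigit, this, Nat.add_mul_div_left _ _ (by positivity), Nat.add_mul_mod_self_left, bdigit]
  · subst h2
    rw [bdigit, add_comm, Nat.add_mul_div_right _ _ (by positivity), Nat.div_eq_of_lt hk, zero_add,
      Nat.mod_eq_of_lt hc]
  · apply bdigit_eq_zero_of_lt
    calc c * b ^ n + k < c * b ^ n + b ^ n := by omega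
      _ = (c + 1) * b ^ n := by ring
      _ ≤ b * b ^ n := Nat.mul_le_mul_right _ hc
      _ = b ^ (n + 1) := by ring
      _ ≤ b ^ i := Nat.pow_le_pow_right hb0 (by omega)

lemma bsupp_lt {b n k i : ℕ} (hb : 2 ≤ b) (hk : k < b ^ n) (hi : i ∈ bsupp b k) : i < n := by
  by_contra h
  exact (mem_bsupp hb k i).1 hi (bdigit_eq_zero_of_lt
    (lt_of_lt_of_le hk (Nat.pow_le_pow_right (by omega) (by omega))))

lemma bsupp_top {b n c k : ℕ} (hb : 2 ≤ b) (hc0 : 0 < c) (hc : c < b) (hk : k < b ^ n) :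
    bsupp b (c * b ^ n + k) = insert n (bsupp b k) := by
  ext i
  rw [Finset.mem_insert, mem_bsupp hb, mem_bsupp hb, bdigit_top hb hc hk]
  split_ifs with h1 h2
  · constructor
    · exact Or.inr
    · rintro (h | h)
      · omega
      · exact h
  · simp [h2]; omega
  · simp [h2, bdigit_eq_zero_of_lt
      (lt_of_lt_of_le hk (Nat.pow_le_pow_right (by omega : 0 < b) (by omega : n ≤ i)))]

lemma bsupp_zero (b : ℕ) : bsupp b 0 = ∅ := by
  simp [bsupp, bdigit]

lemma sort_insert_max (S : Finset ℕ) (n : ℕ) (h : ∀ i ∈ S, i < n) :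
    (insert n S).sort (· ≤ ·) = S.sort (· ≤ ·) ++ [n] := by
  have hn : n ∉ S := fun hn => lt_irrefl _ (h n hn)
  refine List.Perm.eq_of_pairwise (le := (· ≤ ·)) (fun a b _ _ h1 h2 => le_antisymm h1 h2)
    (Finset.pairwise_sort _ _) ?_ ?_
  · rw [List.pairwise_append]
    refine ⟨Finset.pairwise_sort _ _, by simp, ?_⟩
    intro a ha c hc
    simp at hc ha
    subst hc
    exact (h a ha).le
  · rw [← Multiset.coe_eq_coe, Finset.sort_eq, ← Multiset.coe_add, Finset.sort_eq,
      Finset.insert_val_of_notMem hn]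
    simp [add_comm, ← Multiset.singleton_add]

lemma dick_zero_left (b k : ℕ) : dick b 0 k = 0 := by simp [dick]

lemma dick_zero_right (b α : ℕ) : dick b α 0 = 0 := by simp [dick, bsupp_zero]

/-- Recursion of the Dick metric on the leading digit; most inductions on `α` below run through
this identity. -/
lemma dick_top {b n c k : ℕ} (α : ℕ) (hb : 2 ≤ b) (hc0 : 0 < c) (hc : c < b) (hk : k < b ^ n) :
    dick b (α + 1) (c * b ^ n + k) = n + 1 + dick b α k := by
  rw [dick, bsupp_top hb hc0 hc hk, sort_insert_max _ _ (fun i hi => bsupp_lt hb hk hi)]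
  simp [dick]

/-- Splitting off the leading digit. -/
lemma exists_top {b k : ℕ} (hb : 2 ≤ b) (hk : k ≠ 0) :
    ∃ n c k', 0 < c ∧ c < b ∧ k' < b ^ n ∧ k = c * b ^ n + k' := by
  refine ⟨Nat.log b k, k / b ^ Nat.log b k, k % b ^ Nat.log b k, ?_, ?_, ?_, ?_⟩
  · exact Nat.div_pos (Nat.pow_log_le_self b hk) (by positivity)
  · rw [Nat.div_lt_iff_lt_mul (by positivity), ← pow_succ']
    exact Nat.lt_pow_succ_log_self (by omega) k
  · exact Nat.mod_lt _ (by positivity)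
  · rw [mul_comm]; exact (Nat.div_add_mod _ _).symm

lemma top_lt {b n m c k : ℕ} (hb : 2 ≤ b) (hc0 : 0 < c) (h : c * b ^ n + k < b ^ m) : n < m := by
  by_contra hmn
  have h1 : b ^ m ≤ b ^ n := Nat.pow_le_pow_right (by omega) (by omega)
  have h2 : 1 * b ^ n ≤ c * b ^ n := Nat.mul_le_mul_right _ hc0
  omega

lemma eq_of_bdigit_eq {b : ℕ} (hb : 2 ≤ b) {k l : ℕ} (h : ∀ i, bdigit b k i = bdigit b l i) :
    k = l := by
  have key : ∀ n, k % b ^ n = l % b ^ n := by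
    intro n
    induction n with
    | zero => simp [Nat.mod_one]
    | succ n ih =>
      rw [pow_succ, Nat.mod_mul, Nat.mod_mul, ih]
      have := h n
      rw [bdigit, bdigit] at this
      rw [this]
  have := key (k + l)
  rwa [Nat.mod_eq_of_lt, Nat.mod_eq_of_lt] at this
  · exact lt_of_lt_of_le (Nat.lt_pow_self (by omega : 1 < b)) (Nat.pow_le_pow_right (by omega) (by omega))
  · exact lt_of_lt_of_le (Nat.lt_pow_self (by omega : 1 < b)) (Nat.pow_le_pow_right (by omega) (by omega))

/-! ### Iterated integrals of Walsh functions -/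

/-- The antiderivative `x ↦ ∫₀ˣ f`. -/
noncomputable def Jop (f : ℝ → ℂ) : ℝ → ℂ := fun x => ∫ t in (0 : ℝ)..x, f t

/-- Measurable, locally integrable, right-continuous functions: for these `Jop f` has right derivative `f`
everywhere, which is what integration by parts needs. -/
structure Nice (f : ℝ → ℂ) : Prop where
  meas : Measurable f
  int : ∀ a b : ℝ, IntervalIntegrable f volume a b
  rc : ∀ x, ContinuousWithinAt f (Set.Ici x) x

lemma Nice.of_continuous {f : ℝ → ℂ} (hf : Continuous f) : Nice f :=
  ⟨hf.measurable, fun a b => hf.intervalIntegrable a b, fun _ => hf.continuousWithinAt⟩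

lemma Nice.mul_continuous {f W : ℝ → ℂ} (hf : Nice f) (hW : Continuous W) :
    Nice fun x => f x * W x :=
  ⟨hf.meas.mul hW.measurable, fun a b => (hf.int a b).mul_continuousOn hW.continuousOn,
    fun x => (hf.rc x).mul hW.continuousWithinAt⟩

lemma Nice.continuous_Jop {f : ℝ → ℂ} (hf : Nice f) : Continuous (Jop f) :=
  intervalIntegral.continuous_primitive hf.int 0

lemma Nice.jop {f : ℝ → ℂ} (hf : Nice f) : Nice (Jop f) :=
  Nice.of_continuous hf.continuous_Jop

lemma Nice.iterate {f : ℝ → ℂ} (hf : Nice f) (i : ℕ) : Nice (Jop^[i] f) := by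
  induction i generalizing f with
  | zero => exact hf
  | succ i ih => exact ih hf.jop

lemma Nice.hasDeriv {f : ℝ → ℂ} (hf : Nice f) (x : ℝ) :
    HasDerivWithinAt (Jop f) (f x) (Set.Ioi x) x :=
  (intervalIntegral.integral_hasDerivWithinAt_right (s := Set.Ici x) (t := Set.Ioi x) (hf.int 0 x)
    (hf.meas.stronglyMeasurable.stronglyMeasurableAtFilter)
    ((hf.rc x).mono Set.Ioi_subset_Ici_self)).mono Set.Ioi_subset_Ici_self

lemma Jop_zero (f : ℝ → ℂ) : Jop f 0 = 0 := by simp [Jop]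

lemma walsh_eq {b : ℕ} (hb : 2 ≤ b) {k N : ℕ} (hk : k < b ^ N) (x : ℝ) :
    walsh b k x = Complex.exp (2 * (Real.pi : ℂ) * Complex.I / (b : ℂ) *
      ∑ a ∈ Finset.range N, (bdigit b k a : ℂ) * (rdigit b x (a + 1) : ℂ)) := by
  have h : ∀ M : ℕ, bsupp b k ⊆ Finset.range M →
      ∑ a ∈ Finset.range M, (bdigit b k a : ℂ) * (rdigit b x (a + 1) : ℂ) =
      ∑ a ∈ bsupp b k, (bdigit b k a : ℂ) * (rdigit b x (a + 1) : ℂ) := by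
    intro M hM
    refine (Finset.sum_subset hM fun a _ ha => ?_).symm
    have : bdigit b k a = 0 := by
      by_contra h0
      exact ha ((mem_bsupp hb k a).2 h0)
    simp [this]
  rw [walsh, h _ (Finset.filter_subset _ _), h N]
  intro i hi
  exact Finset.mem_range.2 (bsupp_lt hb hk hi)

lemma walsh_zero (b : ℕ) (x : ℝ) : walsh b 0 x = 1 := by
  simp [walsh, bdigit]

lemma norm_walsh (b k : ℕ) (x : ℝ) : ‖walsh b k x‖ = 1 := by
  have : walsh b k x = Complex.exp (((2 * Real.pi / b *
      ∑ a ∈ Finset.range (k + 1), (bdigit b k a : ℝ) * (rdigit b x (a + 1) : ℝ) : ℝ) : ℂ) *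
        Complex.I) := by
    rw [walsh]; push_cast; congr 1; ring
  rw [this, Complex.norm_exp_ofReal_mul_I]

/-- For `k < b^m`, the Walsh function `wal_k` is constant on `b`-adic intervals of length
`b^{-m}`. -/
lemma walsh_congr {b : ℕ} (hb : 2 ≤ b) {k m : ℕ} (hk : k < b ^ m) {x y : ℝ}
    (h : ⌊x * (b : ℝ) ^ m⌋ = ⌊y * (b : ℝ) ^ m⌋) : walsh b k x = walsh b k y := by
  rw [walsh_eq hb hk, walsh_eq hb hk]
  have hb0 : (b : ℝ) ≠ 0 := by positivity
  have key : ∀ (z : ℝ) (a : ℕ), a < m →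
      ⌊z * (b : ℝ) ^ (a + 1)⌋ = ⌊z * (b : ℝ) ^ m⌋ / ((b ^ (m - a - 1) : ℕ) : ℤ) := by
    intro z a ha
    rw [← Int.floor_div_natCast]
    congr 1
    push_cast
    rw [eq_div_iff (by positivity), mul_assoc, ← pow_add]
    congr 2
    omega
  congr 2
  refine Finset.sum_congr rfl fun a ha => ?_
  rw [rdigit, rdigit, key x a (Finset.mem_range.1 ha), key y a (Finset.mem_range.1 ha), h]

lemma nice_walsh {b : ℕ} (hb : 2 ≤ b) (k : ℕ) : Nice (walsh b k) := by
  have hm : Measurable (walsh b k) := by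
    unfold walsh rdigit
    refine Complex.measurable_exp.comp (Measurable.const_mul ?_ _)
    refine Finset.measurable_sum _ fun a _ => Measurable.const_mul ?_ _
    have h1 : Measurable fun x : ℝ => ⌊x * (b : ℝ) ^ (a + 1)⌋ % (b : ℤ) :=
      (measurable_of_countable (fun z : ℤ => z % (b : ℤ))).comp
        ((measurable_id.mul_const _).floor)
    exact (measurable_of_countable (fun z : ℤ => (z : ℂ))).comp h1
  refine ⟨hm, fun u v => ?_, fun x => ?_⟩
  · refine (intervalIntegrable_const (c := (1 : ℝ))).mono_fun hm.aestronglyMeasurable ?_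
    filter_upwards with x
    simp [norm_walsh]
  · have hk : k < b ^ k := Nat.lt_pow_self (by omega)
    have hB : (0 : ℝ) < (b : ℝ) ^ k := by positivity
    have hev : ∀ᶠ y in nhdsWithin x (Set.Ici x), walsh b k y = walsh b k x := by
      have hmem : Set.Ico x ((⌊x * (b : ℝ) ^ k⌋ + 1) / (b : ℝ) ^ k) ∈ nhdsWithin x (Set.Ici x) := by
        apply Ico_mem_nhdsGE
        rw [lt_div_iff₀ hB]
        exact Int.lt_floor_add_one _
      filter_upwards [hmem] with y hy
      apply walsh_congr hb hk
      rw [Int.floor_eq_iff]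
      refine ⟨(Int.floor_le _).trans (by have := hy.1; gcongr), ?_⟩
      exact (lt_div_iff₀ hB).1 hy.2
    exact (continuousWithinAt_const (b := walsh b k x)).congr_of_eventuallyEq hev rfl

/-- The factor of `walsh b (c * b ^ m + k)` contributed by the leading digit. -/
noncomputable def wtop (b c m : ℕ) (x : ℝ) : ℂ :=
  (Complex.exp (2 * Real.pi * Complex.I / b) ^ c) ^ ⌊x * (b : ℝ) ^ (m + 1)⌋

lemma zeta_pow {b : ℕ} (hb : 2 ≤ b) (c : ℕ) :
    (Complex.exp (2 * Real.pi * Complex.I / b) ^ c) ^ b = 1 := by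
  rw [← pow_mul, mul_comm c b, pow_mul, (Complex.isPrimitiveRoot_exp b (by omega)).pow_eq_one, one_pow]

lemma walsh_top {b : ℕ} (hb : 2 ≤ b) {c m k : ℕ} (hc : c < b) (hk : k < b ^ m) (x : ℝ) :
    walsh b (c * b ^ m + k) x = walsh b k x * wtop b c m x := by
  have hlt : c * b ^ m + k < b ^ (m + 1) := by
    calc c * b ^ m + k < c * b ^ m + b ^ m := by omega
      _ = (c + 1) * b ^ m := by ring
      _ ≤ b * b ^ m := Nat.mul_le_mul_right _ hc
      _ = b ^ (m + 1) := by ring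
  rw [walsh_eq hb hlt, walsh_eq hb hk, Finset.sum_range_succ, mul_add, Complex.exp_add]
  congr 1
  · congr 2
    refine Finset.sum_congr rfl fun a ha => ?_
    rw [bdigit_top hb hc hk, if_pos (Finset.mem_range.1 ha)]
  · rw [bdigit_top hb hc hk, if_neg (lt_irrefl _), if_pos rfl, wtop]
    set z := ⌊x * (b : ℝ) ^ (m + 1)⌋ with hz
    have hζ0 : Complex.exp (2 * Real.pi * Complex.I / b) ^ c ≠ 0 :=
      pow_ne_zero _ (Complex.exp_ne_zero _)
    have h1 : (Complex.exp (2 * Real.pi * Complex.I / b) ^ c) ^ z =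
        (Complex.exp (2 * Real.pi * Complex.I / b) ^ c) ^ (z % (b : ℤ)) := by
      conv_lhs => rw [← Int.emod_add_mul_ediv z b]
      rw [zpow_add₀ hζ0, zpow_mul, zpow_natCast _ b, zeta_pow hb, one_zpow, mul_one]
    rw [h1, rdigit, ← hz, ← zpow_natCast, ← zpow_mul, ← Complex.exp_int_mul]
    congr 1
    push_cast
    ring

lemma wtop_shift {b : ℕ} (hb : 2 ≤ b) (c m : ℕ) (x : ℝ) :
    wtop b c m (x + 1 / (b : ℝ) ^ (m + 1)) =
      Complex.exp (2 * Real.pi * Complex.I / b) ^ c * wtop b c m x := by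
  have hb0 : (b : ℝ) ≠ 0 := by positivity
  have hζ0 : Complex.exp (2 * Real.pi * Complex.I / b) ^ c ≠ 0 :=
      pow_ne_zero _ (Complex.exp_ne_zero _)
  rw [wtop, wtop, add_mul, one_div, inv_mul_cancel₀ (by positivity), Int.floor_add_one,
    zpow_add₀ hζ0, zpow_one, mul_comm]

lemma nice_wtop {b : ℕ} (hb : 2 ≤ b) {c : ℕ} (hc : c < b) (m : ℕ) : Nice (wtop b c m) := by
  have : wtop b c m = walsh b (c * b ^ m + 0) := by
    ext x
    rw [walsh_top hb hc (by positivity), walsh_zero, one_mul]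
  rw [this]
  exact nice_walsh hb _

lemma norm_wtop {b : ℕ} (hb : 2 ≤ b) {c : ℕ} (hc : c < b) (m : ℕ) (x : ℝ) :
    ‖wtop b c m x‖ = 1 := by
  have := walsh_top hb hc (show 0 < b ^ m by positivity) x
  rw [walsh_zero, one_mul] at this
  rw [← this, norm_walsh]

/-- One integration of a Walsh function times a function of small period removes the leading
digit and gains the factor `b⁻ᵐ`. The integral of the product over each interval of length `b⁻ᵐ`
vanishes because a shift by `b⁻ᵐ⁻¹` multiplies the leading-digit factor by a nontrivial root of
unity. -/
lemma walsh_step {b : ℕ} (hb : 2 ≤ b) {c m k n : ℕ} (hc0 : 0 < c) (hc : c < b) (hk : k < b ^ m)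
    (hmn : m < n) {W : ℝ → ℂ} {C : ℝ} (hW : Continuous W)
    (hper : Function.Periodic W (1 / (b : ℝ) ^ n)) (hC : ∀ x, ‖W x‖ ≤ C) :
    ∃ W' : ℝ → ℂ, Continuous W' ∧ Function.Periodic W' (1 / (b : ℝ) ^ m) ∧
      (∀ x, ‖W' x‖ ≤ C / (b : ℝ) ^ m) ∧ W' 0 = 0 ∧
      Jop (fun x => walsh b (c * b ^ m + k) x * W x) = fun x => walsh b k x * W' x := by
  have hb0 : (0 : ℝ) < b := by positivity
  set d : ℝ := 1 / (b : ℝ) ^ m with hd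
  set δ : ℝ := 1 / (b : ℝ) ^ (m + 1) with hδ
  have hd0 : 0 < d := by positivity
  set ζ := Complex.exp (2 * Real.pi * Complex.I / b) ^ c with hζ
  set h : ℝ → ℂ := fun x => wtop b c m x * W x with hh
  have hnice : Nice h := (nice_wtop hb hc m).mul_continuous hW
  have hζ1 : ζ ≠ 1 := (Complex.isPrimitiveRoot_exp b (by omega)).pow_ne_one_of_pos_of_lt hc0.ne' hc
  have hWδ : Function.Periodic W δ := by
    have := hper.nat_mul (b ^ (n - m - 1))
    have e : ((b ^ (n - m - 1) : ℕ) : ℝ) * (1 / (b : ℝ) ^ n) = δ := by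
      rw [hδ]
      push_cast
      rw [mul_one_div, div_eq_div_iff (by positivity) (by positivity), one_mul, ← pow_add]
      congr 1; omega
    rwa [e] at this
  have hshift : ∀ x, h (x + δ) = ζ * h x := by
    intro x
    simp only [hh]
    rw [hWδ x, wtop_shift hb, mul_assoc]
  have hdδ : d = b * δ := by
    rw [hd, hδ, pow_succ]; field_simp
  have hshiftn : ∀ (i : ℕ) (x : ℝ), h (x + i * δ) = ζ ^ i * h x := by
    intro i
    induction i with
    | zero => simp
    | succ i ih =>
      intro x
      have : x + ((i + 1 : ℕ) : ℝ) * δ = (x + i * δ) + δ := by push_cast; ring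
      rw [this, hshift, ih, pow_succ]; ring
  have hperd : Function.Periodic h d := by
    intro x
    rw [hdδ, hshiftn b x, zeta_pow hb, one_mul]
  have hint0 : ∫ x in (0 : ℝ)..d, h x = 0 := by
    have h1 : ∫ x in (0 : ℝ)..d, h (x + δ) = ζ * ∫ x in (0 : ℝ)..d, h x := by
      simp_rw [hshift]
      exact intervalIntegral.integral_const_mul _ _
    rw [intervalIntegral.integral_comp_add_right] at h1
    have h2 := hperd.intervalIntegral_add_eq (0 + δ) 0
    rw [show (0 : ℝ) + δ + d = d + δ by ring, zero_add d] at h2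
    rw [h2] at h1
    have h3 : (ζ - 1) * ∫ x in (0 : ℝ)..d, h x = 0 := by rw [sub_mul, ← h1]; ring
    exact (mul_eq_zero.1 h3).resolve_left (sub_ne_zero.2 hζ1)
  have hintd : ∀ x, ∫ t in x..(x + d), h t = 0 := by
    intro x
    have := hperd.intervalIntegral_add_eq x 0
    rw [zero_add] at this
    rw [this, hint0]
  have hWper : Function.Periodic (Jop h) d := by
    intro x
    rw [Jop, Jop, ← intervalIntegral.integral_add_adjacent_intervals (hnice.int 0 x)
      (hnice.int x (x + d)), hintd, add_zero]
  have hhC : ∀ x, ‖h x‖ ≤ C := by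
    intro x
    simp only [hh]
    rw [norm_mul, norm_wtop hb hc, one_mul]
    exact hC x
  refine ⟨Jop h, hnice.continuous_Jop, hWper, ?_, Jop_zero h, ?_⟩
  · intro x
    obtain ⟨y, hy, hxy⟩ := hWper.exists_mem_Ico₀ hd0 x
    rw [hxy]
    have := intervalIntegral.norm_integral_le_of_norm_le_const (a := 0) (b := y) (f := h) (C := C)
      (fun x _ => hhC x)
    rw [sub_zero, abs_of_nonneg hy.1] at this
    refine this.trans ?_
    have hC0 : 0 ≤ C := (norm_nonneg _).trans (hC 0)
    calc C * y ≤ C * d := by have := hy.2.le; gcongr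
      _ = C / (b : ℝ) ^ m := by rw [hd]; ring
  · set G : ℝ → ℂ := fun x => walsh b (c * b ^ m + k) x * W x with hG
    have hGnice : Nice G := (nice_walsh hb _).mul_continuous hW
    have hGh : ∀ x, G x = walsh b k x * h x := by
      intro x
      simp only [hG, hh]
      rw [walsh_top hb hc hk, mul_assoc]
    have hfl : ∀ (j : ℤ) (x : ℝ), j * d ≤ x → x < (j + 1) * d → ⌊x * (b : ℝ) ^ m⌋ = j := by
      intro j x h1 h2
      have hB : (0 : ℝ) < (b : ℝ) ^ m := by positivity
      rw [Int.floor_eq_iff]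
      rw [hd, mul_one_div] at h1 h2
      exact ⟨(div_le_iff₀ hB).1 h1, (lt_div_iff₀ hB).1 h2⟩
    -- On the interval `[j d, (j+1) d]` the factor `walsh b k` is constant.
    have hloc : ∀ (j : ℤ) (x : ℝ), j * d ≤ x → x ≤ (j + 1) * d →
        ∫ t in (j * d)..x, G t = walsh b k (j * d) * ∫ t in (j * d)..x, h t := by
      intro j x h1 h2
      rw [← intervalIntegral.integral_const_mul]
      refine intervalIntegral.integral_congr_ae_restrict ?_
      rw [Filter.EventuallyEq, ae_restrict_iff' measurableSet_uIoc]
      have hne : ∀ᵐ t : ℝ, t ≠ (j + 1) * d := by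
        simp [ae_iff, measure_singleton]
      filter_upwards [hne] with t ht1 ht
      rw [Set.uIoc_of_le h1] at ht
      rw [hGh]
      congr 1
      apply walsh_congr hb hk
      rw [hfl j t ht.1.le (lt_of_le_of_ne (ht.2.trans h2) ht1),
        hfl j (j * d) le_rfl (by nlinarith)]
    have hh0 : ∀ j : ℤ, ∫ t in (j * d)..((j + 1) * d), G t = 0 := by
      intro j
      rw [hloc j _ (by nlinarith) le_rfl, show ((j : ℝ) + 1) * d = j * d + d by ring, hintd, mul_zero]
    have hstep : ∀ j : ℤ, Jop G ((j + 1) * d) = Jop G (j * d) := by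
      intro j
      rw [Jop, Jop, ← intervalIntegral.integral_add_adjacent_intervals (hGnice.int 0 (j * d))
        (hGnice.int _ _), hh0, add_zero]
    have hG0 : ∀ j : ℤ, Jop G (j * d) = 0 := by
      intro j
      induction j with
      | zero => simp [Jop]
      | succ i ih => rw [← ih]; push_cast; exact_mod_cast hstep i
      | pred i ih =>
        rw [← ih]
        have := hstep (-i - 1)
        push_cast at this ⊢
        rw [← this]; congr 1; ring
    have hW0 : ∀ j : ℤ, Jop h (j * d) = 0 := by
      intro j
      have := hWper.int_mul j 0
      rw [zero_add] at this
      rw [this, Jop_zero]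
    funext x
    set j := ⌊x / d⌋ with hj
    have hj1 : j * d ≤ x := by
      rw [← le_div_iff₀ hd0]; exact Int.floor_le _
    have hj2 : x < (j + 1) * d := by
      rw [← div_lt_iff₀ hd0]; exact Int.lt_floor_add_one _
    have e1 : Jop G x = Jop G (j * d) + ∫ t in (j * d)..x, G t := by
      rw [Jop, Jop, intervalIntegral.integral_add_adjacent_intervals (hGnice.int _ _) (hGnice.int _ _)]
    have e2 : Jop h x = Jop h (j * d) + ∫ t in (j * d)..x, h t := by
      rw [Jop, Jop, intervalIntegral.integral_add_adjacent_intervals (hnice.int _ _) (hnice.int _ _)]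
    rw [e1, e2, hG0, hW0, zero_add, zero_add, hloc j x hj1 hj2.le]
    congr 1
    apply walsh_congr hb hk
    rw [hfl j x hj1 hj2, hfl j (j * d) le_rfl (by nlinarith)]

/-- `f` can be integrated `ρ ≤ α` times with vanishing boundary values at `1`, the last of these
antiderivatives being bounded by `A`. -/
def Decay (α : ℕ) (f : ℝ → ℂ) (A : ℝ) : Prop :=
  ∃ ρ ≤ α, (∀ i, 1 ≤ i → i ≤ ρ → Jop^[i] f 1 = 0) ∧
    ∀ x ∈ Set.Icc (0 : ℝ) 1, ‖Jop^[ρ] f x‖ ≤ A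

/-- Induction on the order: each integration strips one leading digit by `walsh_step`, and the
process stops after `α` steps or when no digit is left. The periodic factor `W` collects what the
previous integrations produced. -/
lemma decay_walsh_mul {b : ℕ} (hb : 2 ≤ b) (α : ℕ) : ∀ {k n : ℕ} (_ : k < b ^ n) {W : ℝ → ℂ}
    {C : ℝ} (_ : Continuous W) (_ : Function.Periodic W (1 / (b : ℝ) ^ n))
    (_ : ∀ x, ‖W x‖ ≤ C),
    Decay α (fun x => walsh b k x * W x) (C * (b : ℝ) ^ α / (b : ℝ) ^ dick b α k) := by
  have hb1 : (1 : ℝ) ≤ b := by exact_mod_cast (by omega : 1 ≤ b)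
  induction α with
  | zero =>
    intro k n hk W C hW hper hC
    refine ⟨0, le_rfl, fun i h1 h2 => by omega, fun x _ => ?_⟩
    simpa [dick_zero_left, norm_walsh] using hC x
  | succ α ih =>
    intro k n hk W C hW hper hC
    have hC0 : 0 ≤ C := (norm_nonneg _).trans (hC 0)
    by_cases h0 : k = 0
    · subst h0
      refine ⟨0, by omega, fun i h1 h2 => by omega, fun x _ => ?_⟩
      simp only [Function.iterate_zero, id, walsh_zero, one_mul, dick_zero_right, pow_zero, div_one]
      exact (hC x).trans (le_mul_of_one_le_right hC0 (one_le_pow₀ hb1))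
    · obtain ⟨m, c, k', hc0, hc, hk', rfl⟩ := exists_top hb h0
      obtain ⟨W', hW'c, hW'p, hW'C, hW'0, hJ⟩ :=
        walsh_step hb hc0 hc hk' (top_lt hb hc0 hk) hW hper hC
      obtain ⟨ρ, hρ, h1, h2⟩ := ih hk' hW'c hW'p hW'C
      refine ⟨ρ + 1, by omega, ?_, ?_⟩
      · intro i hi1 hi2
        obtain ⟨i, rfl⟩ : ∃ i', i = i' + 1 := ⟨i - 1, by omega⟩
        rw [Function.iterate_succ_apply, hJ]
        rcases Nat.eq_zero_or_pos i with rfl | hi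
        · have : W' 1 = 0 := by
            have := hW'p.nat_mul (b ^ m) 0
            rw [zero_add, hW'0] at this
            rwa [Nat.cast_pow, mul_one_div_cancel (by positivity)] at this
          simp [this]
        · exact h1 i hi (by omega)
      · intro x hx
        rw [Function.iterate_succ_apply, hJ]
        refine (h2 x hx).trans (le_of_eq ?_)
        rw [dick_top α hb hc0 hc hk']
        field_simp
        ring

lemma decay_walsh {b : ℕ} (hb : 2 ≤ b) (α k : ℕ) :
    Decay α (walsh b k) ((b : ℝ) ^ α / (b : ℝ) ^ dick b α k) := by
  have := decay_walsh_mul hb α (k := k) (n := k) (Nat.lt_pow_self (by omega)) (W := fun _ => 1)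
    (C := 1) continuous_const (fun _ => rfl) (fun _ => by simp)
  simpa using this

lemma Jop_conj (f : ℝ → ℂ) :
    Jop (fun x => (starRingEnd ℂ) (f x)) = fun x => (starRingEnd ℂ) (Jop f x) := by
  funext x
  simp only [Jop, intervalIntegral]
  rw [map_sub, integral_conj, integral_conj]

lemma Jop_iterate_conj (i : ℕ) : ∀ f : ℝ → ℂ,
    Jop^[i] (fun x => (starRingEnd ℂ) (f x)) = fun x => (starRingEnd ℂ) (Jop^[i] f x) := by
  induction i with
  | zero => intro f; rfl
  | succ i ih => intro f; rw [Function.iterate_succ_apply, Jop_conj, ih]; rfl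

lemma Decay.conj {α : ℕ} {f : ℝ → ℂ} {A : ℝ} (h : Decay α f A) :
    Decay α (fun x => (starRingEnd ℂ) (f x)) A := by
  obtain ⟨ρ, hρ, h1, h2⟩ := h
  refine ⟨ρ, hρ, fun i hi hi' => ?_, fun x hx => ?_⟩
  · rw [Jop_iterate_conj]; simp [h1 i hi hi']
  · rw [Jop_iterate_conj]; simpa using h2 x hx

lemma Nice.conj {f : ℝ → ℂ} (h : Nice f) : Nice fun x => (starRingEnd ℂ) (f x) := by
  have hm : Measurable fun x => (starRingEnd ℂ) (f x) :=
    Complex.continuous_conj.measurable.comp h.meas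
  refine ⟨hm, fun a b => ?_, fun x => ?_⟩
  · refine (h.int a b).mono_fun hm.aestronglyMeasurable ?_
    filter_upwards with x
    simp
  · exact Complex.continuous_conj.continuousAt.comp_continuousWithinAt (h.rc x)

/-! ### Walsh coefficients of the kernel -/

lemma ibp {u u' f : ℝ → ℂ} (hu : Continuous u)
    (hd : ∀ x, HasDerivWithinAt u (u' x) (Set.Ioi x) x) (hu' : Nice u') (hf : Nice f) (y : ℝ) :
    ∫ x in (0 : ℝ)..y, u x * f x = u y * Jop f y - ∫ x in (0 : ℝ)..y, u' x * Jop f x := by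
  have := intervalIntegral.integral_mul_deriv_eq_deriv_mul_of_hasDeriv_right (a := 0) (b := y)
    (u := u) (v := Jop f) (u' := u') (v' := f) hu.continuousOn hf.continuous_Jop.continuousOn
    (fun x _ => hd x) (fun x _ => hf.hasDeriv x) (hu'.int 0 y) (hf.int 0 y)
  rw [this, Jop_zero]
  ring

/-- Cauchy's formula for repeated integration. -/
lemma cauchy_repeated (n : ℕ) : ∀ {f : ℝ → ℂ} (_ : Nice f) (x : ℝ),
    ∫ y in (0 : ℝ)..x, ((x : ℂ) - y) ^ n * f y = (n.factorial : ℂ) * Jop^[n + 1] f x := by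
  induction n with
  | zero => intro f hf x; simp [Jop]
  | succ n ih =>
    intro f hf x
    have hd : ∀ y : ℝ, HasDerivAt (fun y : ℝ => ((x : ℂ) - y) ^ (n + 1))
        (-((n + 1 : ℕ) : ℂ) * ((x : ℂ) - y) ^ n) y := by
      intro y
      have h1 : HasDerivAt (fun y : ℝ => (x : ℂ) - y) (-1) y := by
        simpa using ((hasDerivAt_id (𝕜 := ℝ) y).ofReal_comp).const_sub (x : ℂ)
      have h2 := h1.pow (n + 1)
      refine h2.congr_deriv ?_
      simp; ring
    rw [ibp (u := fun y : ℝ => ((x : ℂ) - y) ^ (n + 1)) (by fun_prop)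
      (fun y => (hd y).hasDerivWithinAt) (Nice.of_continuous (by fun_prop)) hf x]
    have h3 : ∀ y : ℝ, -((n + 1 : ℕ) : ℂ) * ((x : ℂ) - y) ^ n * Jop f y =
        -((n + 1 : ℕ) : ℂ) * (((x : ℂ) - y) ^ n * Jop f y) := fun y => by ring
    simp_rw [h3]
    rw [intervalIntegral.integral_const_mul, ih hf.jop x, Function.iterate_succ_apply,
      Nat.factorial_succ]
    simp only [sub_self, Function.iterate_succ_apply]
    push_cast
    ring

lemma ibp_poly (ρ : ℕ) : ∀ (P : Polynomial ℂ) {f : ℝ → ℂ} (_ : Nice f)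
    (_ : ∀ i, 1 ≤ i → i ≤ ρ → Jop^[i] f 1 = 0),
    ∫ x in (0 : ℝ)..1, P.eval (x : ℂ) * f x =
      (-1) ^ ρ * ∫ x in (0 : ℝ)..1, (Polynomial.derivative^[ρ] P).eval (x : ℂ) * Jop^[ρ] f x := by
  induction ρ with
  | zero => intro P f hf h; simp
  | succ ρ ih =>
    intro P f hf h
    rw [ibp (u := fun x : ℝ => P.eval (x : ℂ)) (u' := fun x : ℝ => P.derivative.eval (x : ℂ))
      (P.continuous.comp Complex.continuous_ofReal)
      (fun x => ((P.hasDerivAt (x : ℂ)).comp_ofReal).hasDerivWithinAt)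
      (Nice.of_continuous (P.derivative.continuous.comp Complex.continuous_ofReal)) hf]
    have h1 : Jop f 1 = 0 := h 1 le_rfl (by omega)
    rw [h1, ih P.derivative hf.jop (fun i hi hi' => h (i + 1) (by omega) (by omega)),
      Function.iterate_succ_apply, Function.iterate_succ_apply]
    ring

/-- Moves `ρ` integrations from `g` onto `f`; there are no boundary terms because the
antiderivatives of `f` vanish at both endpoints. -/
lemma ibp_Jop (r ρ : ℕ) : ∀ {f g : ℝ → ℂ} (_ : Nice f) (_ : Nice g)
    (_ : ∀ i, 1 ≤ i → i ≤ ρ → Jop^[i] f 1 = 0),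
    ∫ x in (0 : ℝ)..1, f x * Jop^[r + ρ] g x =
      (-1) ^ ρ * ∫ x in (0 : ℝ)..1, Jop^[ρ] f x * Jop^[r] g x := by
  induction ρ with
  | zero => intro f g hf hg h; simp
  | succ ρ ih =>
    intro f g hf hg h
    have h1 : Jop f 1 = 0 := h 1 le_rfl (by omega)
    have h2 : ∫ x in (0 : ℝ)..1, f x * Jop^[r + (ρ + 1)] g x =
        ∫ x in (0 : ℝ)..1, Jop (Jop^[r + ρ] g) x * f x := by
      congr 1; ext x; rw [← add_assoc, Function.iterate_succ_apply', mul_comm]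
    rw [h2, ibp (hg.iterate _).continuous_Jop (hg.iterate _).hasDeriv (hg.iterate _) hf, h1]
    have h3 : ∫ x in (0 : ℝ)..1, Jop^[r + ρ] g x * Jop f x =
        ∫ x in (0 : ℝ)..1, Jop f x * Jop^[r + ρ] g x := by
      congr 1; ext x; rw [mul_comm]
    rw [h3, ih hf.jop hg (fun i hi hi' => h (i + 1) (by omega) (by omega)),
      Function.iterate_succ_apply]
    ring

lemma Decay.nonneg {α : ℕ} {f : ℝ → ℂ} {A : ℝ} (h : Decay α f A) : 0 ≤ A := by
  obtain ⟨ρ, _, _, h2⟩ := h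
  exact (norm_nonneg _).trans (h2 0 (by simp))

lemma norm_int_le {f : ℝ → ℂ} {C y : ℝ} (hy : y ∈ Set.Icc (0 : ℝ) 1)
    (h : ∀ x ∈ Set.Icc (0 : ℝ) 1, ‖f x‖ ≤ C) : ‖∫ x in (0 : ℝ)..y, f x‖ ≤ C := by
  have hC : 0 ≤ C := (norm_nonneg _).trans (h 0 (by simp))
  have := intervalIntegral.norm_integral_le_of_norm_le_const (a := 0) (b := y) (f := f) (C := C) ?_
  · rw [sub_zero, abs_of_nonneg hy.1] at this
    exact this.trans (mul_le_of_le_one_right hC hy.2)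
  · intro x hx
    rw [Set.uIoc_of_le hy.1] at hx
    exact h x ⟨hx.1.le, hx.2.trans hy.2⟩

lemma Jop_iterate_bound {f : ℝ → ℂ} {C : ℝ} (h : ∀ x ∈ Set.Icc (0 : ℝ) 1, ‖f x‖ ≤ C) (i : ℕ) :
    ∀ x ∈ Set.Icc (0 : ℝ) 1, ‖Jop^[i] f x‖ ≤ C := by
  induction i with
  | zero => exact h
  | succ i ih =>
    intro x hx
    rw [Function.iterate_succ_apply']
    exact norm_int_le hx ih

lemma poly_bound (α : ℕ) (P : Polynomial ℂ) : ∃ D : ℝ, 0 ≤ D ∧ ∀ (f : ℝ → ℂ) (A : ℝ), Nice f →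
    Decay α f A → ‖∫ x in (0 : ℝ)..1, P.eval (x : ℂ) * f x‖ ≤ D * A := by
  have hex : ∀ ρ : ℕ, ∃ C : ℝ, ∀ x ∈ Set.Icc (0 : ℝ) 1,
      ‖(Polynomial.derivative^[ρ] P).eval (x : ℂ)‖ ≤ C := by
    intro ρ
    exact isCompact_Icc.exists_bound_of_continuousOn
      ((Polynomial.continuous _).comp Complex.continuous_ofReal).continuousOn
  choose C hC using hex
  have hC0 : ∀ ρ, 0 ≤ C ρ := fun ρ => (norm_nonneg _).trans (hC ρ 0 (by simp))
  refine ⟨∑ ρ ∈ Finset.range (α + 1), C ρ, Finset.sum_nonneg fun ρ _ => hC0 ρ, ?_⟩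
  intro f A hf hdec
  have hA := hdec.nonneg
  obtain ⟨ρ, hρ, h1, h2⟩ := hdec
  rw [ibp_poly ρ P hf h1, norm_mul, norm_pow, norm_neg, norm_one, one_pow, one_mul]
  have : ‖∫ x in (0 : ℝ)..1, (Polynomial.derivative^[ρ] P).eval (x : ℂ) * Jop^[ρ] f x‖ ≤
      C ρ * A := by
    refine norm_int_le (by simp) fun x hx => ?_
    rw [norm_mul]
    exact mul_le_mul (hC ρ x hx) (h2 x hx) (norm_nonneg _) (hC0 ρ)
  refine this.trans (mul_le_mul_of_nonneg_right ?_ hA)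
  exact Finset.single_le_sum (fun i _ => hC0 i) (Finset.mem_range.2 (by omega))

/-- Kernels `G` whose double integrals against functions with decay `A`, `B` are `O(A B)`. The two
continuity conditions provide the integrability needed to add such kernels. -/
def Good (α : ℕ) (G : ℝ → ℝ → ℝ) : Prop :=
  (∀ x, Continuous (G x)) ∧
  (∀ g : ℝ → ℂ, Nice g →
    ContinuousOn (fun x => ∫ y in (0 : ℝ)..1, (G x y : ℂ) * g y) (Set.Icc 0 1)) ∧
  ∃ D : ℝ, 0 ≤ D ∧ ∀ (f g : ℝ → ℂ) (A B : ℝ), Nice f → Nice g → Decay α f A → Decay α g B →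
    ‖∫ x in (0 : ℝ)..1, f x * ∫ y in (0 : ℝ)..1, (G x y : ℂ) * g y‖ ≤ D * (A * B)

lemma Good.add {α : ℕ} {G H : ℝ → ℝ → ℝ} (hG : Good α G) (hH : Good α H) :
    Good α fun x y => G x y + H x y := by
  obtain ⟨g1, g2, D, hD, g3⟩ := hG
  obtain ⟨h1, h2, E, hE, h3⟩ := hH
  have key : ∀ g : ℝ → ℂ, Nice g → ∀ x, ∫ y in (0 : ℝ)..1, ((G x y + H x y : ℝ) : ℂ) * g y =
      (∫ y in (0 : ℝ)..1, (G x y : ℂ) * g y) + ∫ y in (0 : ℝ)..1, (H x y : ℂ) * g y := by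
    intro g hg x
    rw [← intervalIntegral.integral_add]
    · congr 1; ext y; push_cast; ring
    · exact (hg.int 0 1).continuousOn_mul
        (Complex.continuous_ofReal.comp (g1 x)).continuousOn
    · exact (hg.int 0 1).continuousOn_mul
        (Complex.continuous_ofReal.comp (h1 x)).continuousOn
  refine ⟨fun x => (g1 x).add (h1 x), fun g hg => ?_, D + E, by positivity, ?_⟩
  · simp_rw [key g hg]
    exact (g2 g hg).add (h2 g hg)
  · intro f g A B hf hg hA hB
    have e : ∫ x in (0 : ℝ)..1, f x * ∫ y in (0 : ℝ)..1, ((G x y + H x y : ℝ) : ℂ) * g y =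
        (∫ x in (0 : ℝ)..1, f x * ∫ y in (0 : ℝ)..1, (G x y : ℂ) * g y) +
        ∫ x in (0 : ℝ)..1, f x * ∫ y in (0 : ℝ)..1, (H x y : ℂ) * g y := by
      rw [← intervalIntegral.integral_add]
      · congr 1; ext x; rw [key g hg, mul_add]
      · exact (hf.int 0 1).mul_continuousOn (by rw [Set.uIcc_of_le zero_le_one]; exact g2 g hg)
      · exact (hf.int 0 1).mul_continuousOn (by rw [Set.uIcc_of_le zero_le_one]; exact h2 g hg)
    rw [e, add_mul]
    exact (norm_add_le _ _).trans (add_le_add (g3 f g A B hf hg hA hB) (h3 f g A B hf hg hA hB))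

lemma Good.const_mul {α : ℕ} {G : ℝ → ℝ → ℝ} (hG : Good α G) (c : ℝ) :
    Good α fun x y => c * G x y := by
  obtain ⟨g1, g2, D, hD, g3⟩ := hG
  have key : ∀ g : ℝ → ℂ, ∀ x, ∫ y in (0 : ℝ)..1, ((c * G x y : ℝ) : ℂ) * g y =
      c * ∫ y in (0 : ℝ)..1, (G x y : ℂ) * g y := by
    intro g x
    rw [← intervalIntegral.integral_const_mul]
    congr 1; ext y; push_cast; ring
  refine ⟨fun x => (g1 x).const_mul c, fun g hg => ?_, |c| * D, by positivity, ?_⟩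
  · simp_rw [key g]
    exact continuousOn_const.mul (g2 g hg)
  · intro f g A B hf hg hA hB
    have e : ∫ x in (0 : ℝ)..1, f x * ∫ y in (0 : ℝ)..1, ((c * G x y : ℝ) : ℂ) * g y =
        c * ∫ x in (0 : ℝ)..1, f x * ∫ y in (0 : ℝ)..1, (G x y : ℂ) * g y := by
      rw [← intervalIntegral.integral_const_mul]
      congr 1; ext x; rw [key g]; ring
    rw [e, norm_mul, mul_assoc, Complex.norm_real, Real.norm_eq_abs]
    exact mul_le_mul_of_nonneg_left (g3 f g A B hf hg hA hB) (abs_nonneg _)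

lemma Good.zero (α : ℕ) : Good α fun _ _ => 0 :=
  ⟨fun _ => continuous_const, fun g _ => by simpa using continuousOn_const, 0, le_rfl,
    fun f g A B _ _ _ _ => by simp⟩

lemma Good.sum {α : ℕ} {ι : Type*} (S : Finset ι) (G : ι → ℝ → ℝ → ℝ) (h : ∀ i ∈ S, Good α (G i)) :
    Good α fun x y => ∑ i ∈ S, G i x y := by
  classical
  induction S using Finset.induction_on with
  | empty => simpa using Good.zero α
  | insert i S hi ih =>
    simp_rw [Finset.sum_insert hi]
    exact (h i (Finset.mem_insert_self i S)).add
      (ih fun j hj => h j (Finset.mem_insert_of_mem hj))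

lemma Good.prod_poly (α : ℕ) (P Q : Polynomial ℝ) : Good α fun x y => P.eval x * Q.eval y := by
  have hcast : ∀ (R : Polynomial ℝ) (x : ℝ),
      ((R.eval x : ℝ) : ℂ) = (R.map (algebraMap ℝ ℂ)).eval (x : ℂ) := by
    intro R x
    rw [Polynomial.eval_map]
    exact (Polynomial.eval₂_at_apply (p := R) (algebraMap ℝ ℂ) x).symm
  have key : ∀ g : ℝ → ℂ, ∀ x : ℝ, ∫ y in (0 : ℝ)..1, ((P.eval x * Q.eval y : ℝ) : ℂ) * g y =
      (P.map (algebraMap ℝ ℂ)).eval (x : ℂ) *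
        ∫ y in (0 : ℝ)..1, (Q.map (algebraMap ℝ ℂ)).eval (y : ℂ) * g y := by
    intro g x
    rw [← intervalIntegral.integral_const_mul]
    congr 1; ext y
    rw [← hcast, ← hcast]
    push_cast; ring
  obtain ⟨D, hD, hP⟩ := poly_bound α (P.map (algebraMap ℝ ℂ))
  obtain ⟨E, hE, hQ⟩ := poly_bound α (Q.map (algebraMap ℝ ℂ))
  refine ⟨fun x => continuous_const.mul Q.continuous, fun g hg => ?_, D * E, by positivity, ?_⟩
  · simp_rw [key g]
    exact (((Polynomial.continuous _).comp Complex.continuous_ofReal).mul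
      continuous_const).continuousOn
  · intro f g A B hf hg hA hB
    have e : ∫ x in (0 : ℝ)..1, f x * ∫ y in (0 : ℝ)..1, ((P.eval x * Q.eval y : ℝ) : ℂ) * g y =
        (∫ x in (0 : ℝ)..1, (P.map (algebraMap ℝ ℂ)).eval (x : ℂ) * f x) *
        ∫ y in (0 : ℝ)..1, (Q.map (algebraMap ℝ ℂ)).eval (y : ℂ) * g y := by
      rw [← intervalIntegral.integral_mul_const]
      congr 1; ext x; rw [key g]; ring
    rw [e, norm_mul]
    have := mul_le_mul (hP f A hf hA) (hQ g B hg hB) (norm_nonneg _) (mul_nonneg hD hA.nonneg)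
    refine this.trans (le_of_eq (by ring))

/-- Integration against the truncated power in the second variable is an iterated integral of
order `2α`; half of the integrations are moved onto the other factor. -/
lemma Good.trunc {α : ℕ} (hα : 1 ≤ α) : Good α fun x y => (max (x - y) 0) ^ (2 * α - 1) := by
  obtain ⟨n, hn⟩ : ∃ n, 2 * α - 1 = n + 1 := ⟨2 * α - 2, by omega⟩
  have hn2 : n + 1 + 1 = 2 * α := by omega
  have hGc : ∀ x : ℝ, Continuous fun y : ℝ => (max (x - y) 0) ^ (n + 1) := by
    intro x; fun_prop
  have key : ∀ g : ℝ → ℂ, Nice g → ∀ x ∈ Set.Icc (0 : ℝ) 1,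
      ∫ y in (0 : ℝ)..1, (((max (x - y) 0) ^ (n + 1) : ℝ) : ℂ) * g y =
        ((n + 1).factorial : ℂ) * Jop^[2 * α] g x := by
    intro g hg x hx
    have hcont_int : ∀ a c : ℝ, IntervalIntegrable
        (fun y => (((max (x - y) 0) ^ (n + 1) : ℝ) : ℂ) * g y) volume a c := fun a c =>
      (hg.int a c).continuousOn_mul (Complex.continuous_ofReal.comp (hGc x)).continuousOn
    rw [← intervalIntegral.integral_add_adjacent_intervals (hcont_int 0 x) (hcont_int x 1), ← hn2,
      ← cauchy_repeated (n + 1) hg x]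
    have z : ∫ y in x..1, (((max (x - y) 0) ^ (n + 1) : ℝ) : ℂ) * g y = 0 := by
      rw [intervalIntegral.integral_congr (g := fun _ => 0)]
      · simp
      · intro y hy
        rw [Set.uIcc_of_le hx.2] at hy
        simp only
        rw [max_eq_right (by linarith [hy.1])]
        simp
    rw [z, add_zero]
    refine intervalIntegral.integral_congr fun y hy => ?_
    rw [Set.uIcc_of_le hx.1] at hy
    rw [max_eq_left (by linarith [hy.2])]
    push_cast; rfl
  rw [hn]
  refine ⟨hGc, fun g hg => ?_, (n + 1).factorial, by positivity, ?_⟩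
  · refine ContinuousOn.congr ?_ (key g hg)
    refine continuousOn_const.mul (Continuous.continuousOn ?_)
    rw [show 2 * α = (n + 1) + 1 by omega, Function.iterate_succ']
    exact (hg.iterate (n + 1)).continuous_Jop
  · intro f g A B hf hg hA hB
    have hA0 := hA.nonneg
    obtain ⟨ρ, hρ, h1, h2⟩ := hA
    obtain ⟨σ, hσ, _, h4⟩ := hB
    have e : ∫ x in (0 : ℝ)..1, f x *
          ∫ y in (0 : ℝ)..1, (((max (x - y) 0) ^ (n + 1) : ℝ) : ℂ) * g y =
        ((n + 1).factorial : ℂ) * ∫ x in (0 : ℝ)..1, f x * Jop^[(2 * α - ρ) + ρ] g x := by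
      rw [← intervalIntegral.integral_const_mul]
      refine intervalIntegral.integral_congr fun x hx => ?_
      rw [Set.uIcc_of_le zero_le_one] at hx
      rw [key g hg x hx, show 2 * α - ρ + ρ = 2 * α by omega]; ring
    rw [e, ibp_Jop _ _ hf hg h1, norm_mul, norm_mul, norm_pow, norm_neg, norm_one, one_pow, one_mul,
      Complex.norm_natCast]
    refine mul_le_mul_of_nonneg_left ?_ (by positivity)
    refine norm_int_le (by simp) fun x hx => ?_
    rw [norm_mul]
    refine mul_le_mul (h2 x hx) ?_ (norm_nonneg _) hA0
    rw [show 2 * α - ρ = (2 * α - ρ - σ) + σ by omega, Function.iterate_add_apply]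
    exact Jop_iterate_bound h4 _ x hx

/-- The real Bernoulli polynomial. -/
noncomputable def bernR (r : ℕ) : Polynomial ℝ := (Polynomial.bernoulli r).map (algebraMap ℚ ℝ)

lemma bernoulliPoly_eq (r : ℕ) (x : ℝ) : bernoulliPoly r x = (bernR r).eval x := by
  rw [bernoulliPoly, bernR, Polynomial.eval_map_algebraMap]

lemma bernoulliPoly_neg (α : ℕ) (t : ℝ) : bernoulliPoly (2 * α) (-t) =
    bernoulliPoly (2 * α) t + 2 * α * t ^ (2 * α - 1) := by
  have h := congrArg (fun P : Polynomial ℚ => Polynomial.aeval t P)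
    (Polynomial.bernoulli_comp_neg_X (2 * α))
  simp only [Polynomial.aeval_comp] at h
  have h2 : (Polynomial.aeval t) (2 : Polynomial ℚ) = (2 : ℝ) := map_ofNat _ 2
  simpa [bernoulliPoly, h2] using h

/-- `B_{2α}(|x-y|)` differs from a polynomial in `x, y` by a truncated power, which carries the only
singularity of the kernel, on the diagonal. -/
lemma bernoulli_abs (α : ℕ) (hα : 1 ≤ α) (x y : ℝ) : bernoulliPoly (2 * α) |x - y| =
    bernoulliPoly (2 * α) (y - x) + (-(2 * α : ℝ)) * (max (x - y) 0) ^ (2 * α - 1) := by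
  rcases le_total y x with h | h
  · rw [abs_of_nonneg (by linarith), max_eq_left (by linarith), ← neg_sub x y, bernoulliPoly_neg]
    ring
  · rw [abs_of_nonpos (by linarith), max_eq_right (by linarith), zero_pow (by omega), neg_sub]
    ring

lemma Good.poly_sub (α : ℕ) (P : Polynomial ℝ) : Good α fun x y => P.eval (y - x) := by
  have : (fun x y : ℝ => P.eval (y - x)) = fun x y => ∑ n ∈ Finset.range (P.natDegree + 1),
      P.coeff n * ∑ m ∈ Finset.range (n + 1), (n.choose m : ℝ) *
        (((-Polynomial.X : Polynomial ℝ) ^ (n - m)).eval x * ((Polynomial.X : Polynomial ℝ) ^ m).eval y) := by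
    ext x y
    rw [Polynomial.eval_eq_sum_range]
    refine Finset.sum_congr rfl fun n _ => ?_
    rw [sub_eq_add_neg, add_pow]
    congr 1
    refine Finset.sum_congr rfl fun m _ => ?_
    simp; ring
  rw [this]
  refine Good.sum _ _ fun n _ => Good.const_mul (Good.sum _ _ fun m _ => Good.const_mul ?_ _) _
  exact Good.prod_poly α _ _

lemma good_Kker {α : ℕ} (hα : 1 ≤ α) : Good α (Kker α) := by
  have : Kker α = fun x y => (∑ r ∈ Finset.range (α + 1),
      (((r.factorial : ℝ)) ^ 2)⁻¹ * ((bernR r).eval x * (bernR r).eval y)) +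
      ((-1 : ℝ) ^ (α + 1) / ((2 * α).factorial : ℝ)) * ((bernR (2 * α)).eval (y - x) +
        (-(2 * α : ℝ)) * (max (x - y) 0) ^ (2 * α - 1)) := by
    ext x y
    rw [Kker, bernoulli_abs α hα, bernoulliPoly_eq]
    congr 1
    · refine Finset.sum_congr rfl fun r _ => ?_
      rw [bernoulliPoly_eq, bernoulliPoly_eq]; ring
    · ring
  rw [this]
  exact (Good.sum _ _ fun r _ => (Good.prod_poly α _ _).const_mul _).add
    (((Good.poly_sub α _).add ((Good.trunc hα).const_mul _)).const_mul _)

/-- The weight `b^{-μ_α(k)}`. -/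
noncomputable def wt (b α k : ℕ) : ℝ := ((b : ℝ) ^ dick b α k)⁻¹

lemma wt_nonneg (b α k : ℕ) : 0 ≤ wt b α k := by unfold wt; positivity

/-- Decay of the univariate Walsh coefficients in both frequencies. -/
lemma norm_Khat_le {b : ℕ} (hb : 2 ≤ b) {α : ℕ} (hα : 1 ≤ α) : ∃ D : ℝ, 0 ≤ D ∧ ∀ k l : ℕ,
    ‖Khat b α k l‖ ≤ D * (wt b α k * wt b α l) := by
  obtain ⟨_, _, D, hD, h⟩ := good_Kker hα
  refine ⟨D * ((b : ℝ) ^ α * (b : ℝ) ^ α), by positivity, fun k l => ?_⟩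
  have := h _ _ _ _ (nice_walsh hb k).conj (nice_walsh hb l) (decay_walsh hb α k).conj
    (decay_walsh hb α l)
  have e : Khat b α k l = ∫ x in (0 : ℝ)..1, (starRingEnd ℂ) (walsh b k x) *
      ∫ y in (0 : ℝ)..1, (Kker α x y : ℂ) * walsh b l y := by
    rw [Khat, integral_Ico_eq_integral_Ioc, intervalIntegral.integral_of_le zero_le_one]
    congr 1; ext x
    rw [integral_Ico_eq_integral_Ioc, intervalIntegral.integral_of_le zero_le_one,
      ← integral_const_mul]
    congr 1; ext y; ring
  rw [e]
  refine this.trans (le_of_eq ?_)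
  unfold wt; ring

lemma KhatS_eq (b α s : ℕ) (k l : Fin s → ℕ) : KhatS b α s k l = ∏ j, Khat b α (k j) (l j) := by
  have hr : (volume : Measure (Fin s → ℝ)).restrict
      (Set.univ.pi fun _ : Fin s => Set.Ico (0 : ℝ) 1) =
      Measure.pi fun _ : Fin s => (volume : Measure ℝ).restrict (Set.Ico (0 : ℝ) 1) := by
    rw [volume_pi, Measure.restrict_pi_pi]
  rw [KhatS, hr]
  unfold Khat
  rw [← integral_fintype_prod_eq_prod (𝕜 := ℂ) (fun j x => ∫ y in Set.Ico (0 : ℝ) 1,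
    (Kker α x y : ℂ) * (starRingEnd ℂ) (walsh b (k j) x) * walsh b (l j) y)]
  congr 1; ext x
  rw [← integral_fintype_prod_eq_prod (𝕜 := ℂ) (fun j y =>
    (Kker α (x j) y : ℂ) * (starRingEnd ℂ) (walsh b (k j) (x j)) * walsh b (l j) y)]
  congr 1; ext y
  rw [walshVec, walshVec, map_prod, Finset.prod_mul_distrib, Finset.prod_mul_distrib]
  push_cast; rfl

lemma norm_KhatS_le {b : ℕ} (hb : 2 ≤ b) {α : ℕ} (hα : 1 ≤ α) (s : ℕ) : ∃ D : ℝ, 0 ≤ D ∧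
    ∀ k l : Fin s → ℕ,
      ‖KhatS b α s k l‖ ≤ D * ((∏ j, wt b α (k j)) * ∏ j, wt b α (l j)) := by
  obtain ⟨D, hD, h⟩ := norm_Khat_le hb hα
  refine ⟨D ^ s, by positivity, fun k l => ?_⟩
  rw [KhatS_eq, norm_prod]
  calc ∏ j, ‖Khat b α (k j) (l j)‖ ≤ ∏ j, D * (wt b α (k j) * wt b α (l j)) :=
        Finset.prod_le_prod (fun j _ => norm_nonneg _) (fun j _ => h _ _)
    _ = _ := by
        rw [Finset.prod_mul_distrib, Finset.prod_mul_distrib]; simp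

/-! ### Row independence of the interlaced Chen–Skriganov matrices -/

section Algebra

open Polynomial

variable {K : Type*} [Field K]

lemma hasse_factor (a : K) (e q : ℕ) (h : K[X]) :
    (hasseDeriv q ((X - C a) ^ e * h)).eval a =
      if e ≤ q then (taylor a h).coeff (q - e) else 0 := by
  rw [← taylor_coeff, taylor_mul, taylor_pow, map_sub, taylor_X, taylor_C, add_sub_cancel_right,
    coeff_X_pow_mul']

/-- A row of the Chen–Skriganov matrix, paired with the coefficient vector of a polynomial of
small degree, evaluates a Hasse derivative of that polynomial. -/
lemma sum_choose_eq_hasse (f : K[X]) {M : ℕ} (hf : f.natDegree < M) (q : ℕ) (a : K) :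
    ∑ v : Fin M, f.coeff v.1 * ((Nat.choose v.1 q : K) * a ^ (v.1 - q)) =
      (hasseDeriv q f).eval a := by
  rw [Fin.sum_univ_eq_sum_range (fun v => f.coeff v * ((Nat.choose v q : K) * a ^ (v - q))) M,
    hasseDeriv_apply, Polynomial.sum_over_range' f (by simp) M hf, eval_finsetSum]
  refine Finset.sum_congr rfl fun v _ => ?_
  rw [eval_monomial]; ring

lemma sum_min_le (w H g : ℕ) : ∑ l ∈ Finset.range g, min w (H - l * w) ≤ H := by
  suffices h : ∑ l ∈ Finset.range g, min w (H - l * w) ≤ min H (g * w) from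
    h.trans (min_le_left _ _)
  induction g with
  | zero => simp
  | succ g ih =>
    rw [Finset.sum_range_succ, Nat.succ_mul]
    omega

/-- If in each Chen–Skriganov matrix (of index `βj+i`) only the first `H j i` rows occur, and
`∑ H j i` is at most the number of columns, then these rows are independent. A nontrivial relation
is contradicted by evaluating it on the Hermite interpolation polynomial which annihilates all
Hasse derivatives involved except one. -/
lemma rows_indep {b s β g w : ℕ} [Fact b.Prime] (hβ : 0 < β) (hw : 0 < w)
    (βe : ℕ → ℕ → ZMod b)
    (hdist : ∀ j l j' l', j < β * s → l < g → j' < β * s → l' < g →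
      βe j l = βe j' l' → j = j' ∧ l = l')
    (H : Fin s → Fin β → ℕ) (hH : ∑ j, ∑ i, H j i ≤ g * w)
    (x : Fin s → Fin (β * (g * w)) → ZMod b)
    (hx : ∀ j r, x j r ≠ 0 → r.1 / β < H j ⟨r.1 % β, Nat.mod_lt _ hβ⟩)
    (h0 : ∑ j, ((interlace β s (g * w) fun j => csMatrix b w (g * w) (βe j.1)) j).transpose.mulVec
      (x j) = 0) : ∀ j r, x j r = 0 := by
  classical
  by_contra! hne
  obtain ⟨j1, r1, hne1⟩ := hne
  -- the node attached to the row `r` of the `j`-th interlaced matrix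
  let nd : Fin s → Fin (β * (g * w)) → Fin s × Fin β × ℕ := fun j r =>
    (j, ⟨r.1 % β, Nat.mod_lt _ hβ⟩, r.1 / β / w)
  have hl : ∀ r : Fin (β * (g * w)), r.1 / β / w < g := fun r =>
    Nat.div_lt_of_lt_mul (by
      rw [mul_comm w g]; exact Nat.div_lt_of_lt_mul r.2)
  -- among the rows with the same node, take one of maximal derivative order
  obtain ⟨r0, ⟨hr0nd, hr0ne⟩, hmax⟩ : ∃ r0, (nd j1 r0 = nd j1 r1 ∧ x j1 r0 ≠ 0) ∧
      ∀ r, nd j1 r = nd j1 r1 ∧ x j1 r ≠ 0 → r.1 / β % w ≤ r0.1 / β % w := by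
    have := Finset.exists_max_image
      (Finset.univ.filter fun r => nd j1 r = nd j1 r1 ∧ x j1 r ≠ 0) (fun r => r.1 / β % w)
      ⟨r1, by simp [hne1]⟩
    obtain ⟨r0, h1, h2⟩ := this
    exact ⟨r0, (Finset.mem_filter.mp h1).2, fun r hr => h2 r (by simpa using hr)⟩
  let S : Finset (Fin s × Fin β × ℕ) := Finset.univ ×ˢ (Finset.univ ×ˢ Finset.range g)
  let pt : Fin s × Fin β × ℕ → ZMod b := fun t => βe (β * t.1.1 + t.2.1.1) t.2.2
  let e : Fin s × Fin β × ℕ → ℕ := fun t => min w (H t.1 t.2.1 - t.2.2 * w)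
  have hSnd : ∀ j r, nd j r ∈ S := fun j r => by simp [S, nd, hl r]
  have hpt : ∀ t ∈ S, ∀ t' ∈ S, pt t = pt t' → t = t' := by
    rintro ⟨j, i, l⟩ ht ⟨j', i', l'⟩ ht' heq
    simp only [S, Finset.mem_product, Finset.mem_univ, Finset.mem_range, true_and] at ht ht'
    have bd : ∀ (j : Fin s) (i : Fin β), β * j.1 + i.1 < β * s := fun j i => by
      have : β * (j.1 + 1) ≤ β * s := Nat.mul_le_mul_left β j.2
      have h2 := i.2
      rw [Nat.mul_succ] at this; omega
    obtain ⟨h1, h2⟩ := hdist _ _ _ _ (bd j i) ht (bd j' i') ht' heq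
    have hj : j.1 = j'.1 := by
      have := congrArg (· / β) h1
      simpa [Nat.mul_add_div hβ, Nat.div_eq_of_lt i.2, Nat.div_eq_of_lt i'.2] using this
    have hi : i.1 = i'.1 := by rw [hj] at h1; omega
    exact Prod.ext (Fin.ext hj) (Prod.ext (Fin.ext hi) h2)
  have horder : ∀ j r, x j r ≠ 0 → r.1 / β % w < e (nd j r) := by
    intro j r hr
    have h1 := hx j r hr
    have h2 := Nat.mod_lt (r.1 / β) hw
    have h3 := Nat.div_add_mod (r.1 / β) w
    rw [mul_comm] at h3
    simp only [e, nd]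
    omega
  set t0 := nd j1 r0 with ht0
  set q0 := r0.1 / β % w with hq0
  let h : (ZMod b)[X] := ∏ t ∈ S.erase t0, (X - C (pt t)) ^ e t
  let f : (ZMod b)[X] := (X - C (pt t0)) ^ q0 * h
  have hdeg : f.natDegree < g * w := by
    have hd1 : h.natDegree ≤ ∑ t ∈ S.erase t0, e t := by
      refine (natDegree_prod_le _ _).trans (Finset.sum_le_sum fun t _ => ?_)
      exact natDegree_pow_le.trans (by simp)
    have hd2 : f.natDegree ≤ q0 + h.natDegree := by
      refine natDegree_mul_le.trans (Nat.add_le_add_right ?_ _)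
      exact natDegree_pow_le.trans (by simp)
    have hd3 : e t0 + ∑ t ∈ S.erase t0, e t = ∑ t ∈ S, e t :=
      Finset.add_sum_erase _ _ (hSnd j1 r0)
    have hd4 : ∑ t ∈ S, e t ≤ ∑ j, ∑ i, H j i := by
      simp only [S, Finset.sum_product, e]
      exact Finset.sum_le_sum fun j _ => Finset.sum_le_sum fun i _ => sum_min_le w (H j i) g
    have hd5 : q0 < e t0 := horder j1 r0 hr0ne
    omega
  -- pair the relation with the coefficient vector of `f`
  have hrel : ∑ j, ∑ r, x j r * (hasseDeriv (r.1 / β % w) f).eval (pt (nd j r)) = 0 := by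
    have := congrArg (fun v : Fin (g * w) → ZMod b => ∑ i, f.coeff i.1 * v i) h0
    simp only [Pi.zero_apply, mul_zero, Finset.sum_const_zero] at this
    rw [← this]
    simp only [Finset.sum_apply, Matrix.mulVec, dotProduct, Finset.mul_sum]
    conv_rhs => rw [Finset.sum_comm]
    refine Finset.sum_congr rfl fun j _ => ?_
    conv_rhs => rw [Finset.sum_comm]
    refine Finset.sum_congr rfl fun r _ => ?_
    rw [← sum_choose_eq_hasse f hdeg, Finset.mul_sum]
    refine Finset.sum_congr rfl fun v _ => ?_
    simp only [Matrix.transpose_apply, interlace, csMatrix, Matrix.of_apply, pt, nd]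
    ring
  have hother : ∀ j r, ¬ (j = j1 ∧ r = r0) →
      x j r * (hasseDeriv (r.1 / β % w) f).eval (pt (nd j r)) = 0 := by
    intro j r hjr
    by_cases hxr : x j r = 0
    · rw [hxr, zero_mul]
    have ho := horder j r hxr
    by_cases hnd : nd j r = t0
    · have hj : j = j1 := congrArg Prod.fst hnd
      subst hj
      have hle := hmax r ⟨hnd.trans hr0nd, hxr⟩
      have hlt : r.1 / β % w < q0 := by
        refine lt_of_le_of_ne hle fun heq => hjr ⟨rfl, ?_⟩
        have h1 : r.1 / β / w = r0.1 / β / w := congrArg (fun t => t.2.2) hnd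
        have h2 : r.1 % β = r0.1 % β := congrArg (fun t => t.2.1.1) hnd
        have h3 : r.1 / β = r0.1 / β := by
          rw [← Nat.div_add_mod (r.1 / β) w, ← Nat.div_add_mod (r0.1 / β) w, h1, heq]
        ext
        rw [← Nat.div_add_mod r.1 β, ← Nat.div_add_mod r0.1 β, h2, h3]
      rw [hnd, hasse_factor, if_neg (by omega), mul_zero]
    · have hmem : nd j r ∈ S.erase t0 := Finset.mem_erase.mpr ⟨hnd, hSnd j r⟩
      have hf : f = (X - C (pt (nd j r))) ^ e (nd j r) * ((X - C (pt t0)) ^ q0 *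
          ∏ t ∈ (S.erase t0).erase (nd j r), (X - C (pt t)) ^ e t) := by
        simp only [f, h]
        rw [← Finset.mul_prod_erase _ _ hmem]; ring
      rw [hf, hasse_factor, if_neg (by omega), mul_zero]
  rw [Finset.sum_eq_single j1 (fun j _ hj => Finset.sum_eq_zero fun r _ =>
      hother j r fun hh => hj hh.1) (by simp),
    Finset.sum_eq_single r0 (fun r _ hr => hother j1 r fun hh => hr hh.2) (by simp),
    ← ht0, ← hq0, hasse_factor, if_pos le_rfl, Nat.sub_self, taylor_coeff_zero] at hrel
  rcases mul_eq_zero.mp hrel with h1 | h1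
  · exact hr0ne h1
  · simp only [h, eval_prod] at h1
    obtain ⟨t, ht, h2⟩ := Finset.prod_eq_zero_iff.mp h1
    simp only [eval_pow, eval_sub, eval_X, eval_C] at h2
    have h3 : pt t0 = pt t := sub_eq_zero.mp (eq_zero_of_pow_eq_zero h2)
    exact (Finset.mem_erase.mp ht).1 (hpt t (Finset.mem_erase.mp ht).2 t0 (hSnd j1 r0) h3.symm)

end Algebra

/-! ### Dick metric and counting in the dual net -/

/-- Water-filling lower bound: `μ_α(k)` dominates `αθ` plus all excesses of digit positions over
a suitable level `θ`. -/
lemma dick_threshold {b : ℕ} (hb : 2 ≤ b) (α : ℕ) : ∀ k n, k < b ^ n →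
    ∃ θ ≤ n, α * θ + ∑ p ∈ bsupp b k, (p + 1 - θ) ≤ dick b α k := by
  induction α with
  | zero =>
    intro k n hk
    refine ⟨n, le_rfl, ?_⟩
    rw [Finset.sum_eq_zero fun p hp => ?_]
    · simp
    · have := bsupp_lt hb hk hp
      omega
  | succ α ih =>
    intro k n hk
    rcases Nat.eq_zero_or_pos k with rfl | hk0
    · exact ⟨0, Nat.zero_le _, by simp [bsupp_zero]⟩
    · obtain ⟨m, c, k', hc0, hc, hk', rfl⟩ := exists_top hb hk0.ne'
      obtain ⟨θ, hθ, h⟩ := ih k' m hk'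
      have hmn := top_lt hb hc0 hk
      refine ⟨θ, by omega, ?_⟩
      rw [dick_top α hb hc0 hc hk', bsupp_top hb hc0 hc hk', Finset.sum_insert]
      · rw [Nat.succ_mul]; omega
      · intro hm
        exact absurd (bsupp_lt hb hk' hm) (lt_irrefl _)

/-- Order-`α` information from interlacing: the heights `H i` reached in the residue classes modulo
`β` by the nonzero digits of `k` are controlled by `μ_α(k)`. -/
lemma dick_ge_heights {b : ℕ} (hb : 2 ≤ b) {α β : ℕ} (hβ : 0 < β) (hαβ : α ≤ β) (k : ℕ)
    (H : Fin β → ℕ)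
    (hH : ∀ i, H i = 0 ∨ ∃ p ∈ bsupp b k, p % β = i.1 ∧ H i = p / β + 1) :
    α * ∑ i, H i ≤ dick b α k + α * β := by
  obtain ⟨θ, -, hθ⟩ := dick_threshold hb α k k (Nat.lt_pow_self (by omega))
  have h1 : ∑ i, (β * H i - (β + θ)) ≤ ∑ p ∈ bsupp b k, (p + 1 - θ) := by
    rw [← Finset.sum_fiberwise_of_maps_to (s := bsupp b k) (t := (Finset.univ : Finset (Fin β)))
      (g := fun p => ⟨p % β, Nat.mod_lt _ hβ⟩) (fun _ _ => Finset.mem_univ _)]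
    refine Finset.sum_le_sum fun i _ => ?_
    rcases hH i with h | ⟨p, hp, hpi, h⟩
    · simp [h]
    · refine le_trans ?_ (Finset.single_le_sum (f := fun p => p + 1 - θ)
        (fun _ _ => Nat.zero_le _) (Finset.mem_filter.mpr ⟨hp, Fin.ext hpi⟩))
      have := Nat.div_add_mod p β
      rw [h, Nat.mul_succ]
      omega
  have h2 : β * ∑ i, H i ≤ β * (β + θ) + ∑ i, (β * H i - (β + θ)) := by
    have : β * (β + θ) = ∑ _i : Fin β, (β + θ) := by simp
    rw [this, ← Finset.sum_add_distrib, Finset.mul_sum]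
    exact Finset.sum_le_sum fun i _ => by omega
  have h3 : β * (α * ∑ i, H i) ≤ β * (dick b α k + α * β) := by
    have e1 : β * (α * ∑ i, H i) ≤ α * (β * (β + θ) + ∑ p ∈ bsupp b k, (p + 1 - θ)) := by
      rw [mul_left_comm]; exact Nat.mul_le_mul_left α (by omega)
    have e2 : α * ∑ p ∈ bsupp b k, (p + 1 - θ) ≤ β * ∑ p ∈ bsupp b k, (p + 1 - θ) :=
      Nat.mul_le_mul_right _ hαβ
    have e3 := Nat.mul_le_mul_left β hθ
    nlinarith
  exact Nat.le_of_mul_le_mul_left h3 hβ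

lemma zmod_bdigit_inj {b : ℕ} (hb : 2 ≤ b) {k l i : ℕ}
    (h : (bdigit b k i : ZMod b) = (bdigit b l i : ZMod b)) : bdigit b k i = bdigit b l i := by
  rw [ZMod.natCast_eq_natCast_iff] at h
  exact Nat.ModEq.eq_of_lt_of_lt h (Nat.mod_lt _ (by omega)) (Nat.mod_lt _ (by omega))

section Dual

variable {b s β g w : ℕ} [Fact b.Prime]

/-- Lower bound for the order-`α` minimum distance of the dual net. -/
lemma dual_dick_ge (hβ : 0 < β) (hw : 0 < w) {α : ℕ} (hα : 1 ≤ α) (hαβ : α ≤ β)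
    (βe : ℕ → ℕ → ZMod b)
    (hdist : ∀ j l j' l', j < β * s → l < g → j' < β * s → l' < g →
      βe j l = βe j' l' → j = j' ∧ l = l')
    (l : Fin s → ℕ)
    (hl : l ∈ dualNetInf b (interlace β s (g * w) fun j => csMatrix b w (g * w) (βe j.1)))
    (hl0 : l ≠ 0) : α * (g * w) ≤ dickVec b α l + s * (α * β) := by
  have hb : 2 ≤ b := (Fact.out : b.Prime).two_le
  by_cases hbox : ∀ j, l j < b ^ (β * (g * w))
  · let H : Fin s → Fin β → ℕ := fun j i =>
      ((bsupp b (l j)).filter fun p => p % β = i.1).sup fun p => p / β + 1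
    have hsum : g * w < ∑ j, ∑ i, H j i := by
      by_contra! hle
      have hz := rows_indep hβ hw βe hdist H hle (fun j => trv b (β * (g * w)) (l j)) ?_ hl
      · apply hl0
        funext j
        refine eq_of_bdigit_eq hb fun i => ?_
        by_cases hi : i < β * (g * w)
        · have h0 : ((bdigit b (l j) i : ℕ) : ZMod b) = ((bdigit b 0 i : ℕ) : ZMod b) := by
            have := hz j ⟨i, hi⟩
            simp only [trv] at this
            rw [this]; simp [bdigit]
          exact zmod_bdigit_inj hb h0
        · rw [bdigit_eq_zero_of_lt ((hbox j).trans_le (Nat.pow_le_pow_right (by omega)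
            (not_lt.mp hi)))]
          simp [bdigit]
      · intro j r hr
        have hr' : r.1 ∈ (bsupp b (l j)).filter fun p => p % β = r.1 % β := by
          rw [Finset.mem_filter, mem_bsupp hb]
          refine ⟨fun h0 => hr ?_, rfl⟩
          simp [trv, h0]
        have := Finset.le_sup (f := fun p => p / β + 1) hr'
        exact this
    have hj : ∀ j, α * ∑ i, H j i ≤ dick b α (l j) + α * β := fun j => by
      refine dick_ge_heights hb hβ hαβ (l j) (H j) fun i => ?_
      rcases Finset.eq_empty_or_nonempty ((bsupp b (l j)).filter fun p => p % β = i.1) with h | h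
      · left; simp [H, h]
      · obtain ⟨p, hp, hpe⟩ := Finset.exists_mem_eq_sup _ h fun p => p / β + 1
        exact Or.inr ⟨p, (Finset.mem_filter.mp hp).1, (Finset.mem_filter.mp hp).2, hpe⟩
    have := Finset.sum_le_sum fun j (_ : j ∈ Finset.univ) => hj j
    rw [← Finset.mul_sum, Finset.sum_add_distrib] at this
    simp only [Finset.sum_const, Finset.card_univ, Fintype.card_fin, smul_eq_mul] at this
    exact (Nat.mul_le_mul_left α hsum.le).trans this
  · push Not at hbox
    obtain ⟨j, hj⟩ := hbox
    have hlj : l j ≠ 0 := by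
      have : 0 < b ^ (β * (g * w)) := by positivity
      omega
    obtain ⟨n, c, k', hc0, hc, hk', he⟩ := exists_top hb hlj
    have hn : β * (g * w) ≤ n := by
      by_contra! hlt
      have h1 : l j < b ^ (n + 1) := by
        rw [he, pow_succ']
        have : (c + 1) * b ^ n ≤ b * b ^ n := Nat.mul_le_mul_right _ hc
        nlinarith
      have h2 : b ^ (n + 1) ≤ b ^ (β * (g * w)) := Nat.pow_le_pow_right (by omega) hlt
      omega
    obtain ⟨a, rfl⟩ : ∃ a, α = a + 1 := ⟨α - 1, by omega⟩
    have h1 : n + 1 ≤ dick b (a + 1) (l j) := by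
      rw [he, dick_top a hb hc0 hc hk']; omega
    have h2 : dick b (a + 1) (l j) ≤ dickVec b (a + 1) l :=
      Finset.single_le_sum (f := fun j => dick b (a + 1) (l j)) (fun _ _ => Nat.zero_le _)
        (Finset.mem_univ j)
    have h3 : (a + 1) * (g * w) ≤ β * (g * w) := Nat.mul_le_mul_right _ hαβ
    omega

/-- Two elements of the dual net that agree in all digits of position at least `f j`, where
`∑ f j` is at most `m = gw`, coincide. -/
lemma dual_inj (hβ : 0 < β) (hw : 0 < w) (βe : ℕ → ℕ → ZMod b)
    (hdist : ∀ j l j' l', j < β * s → l < g → j' < β * s → l' < g →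
      βe j l = βe j' l' → j = j' ∧ l = l')
    (f : Fin s → ℕ) (hf : ∑ j, f j ≤ g * w) (k l : Fin s → ℕ)
    (hk : k ∈ dualNetInf b (interlace β s (g * w) fun j => csMatrix b w (g * w) (βe j.1)))
    (hl : l ∈ dualNetInf b (interlace β s (g * w) fun j => csMatrix b w (g * w) (βe j.1)))
    (hkl : ∀ j, k j / b ^ f j = l j / b ^ f j) : k = l := by
  have hb : 2 ≤ b := (Fact.out : b.Prime).two_le
  have hdig : ∀ j i, f j ≤ i → bdigit b (k j) i = bdigit b (l j) i := by
    intro j i hi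
    obtain ⟨d, rfl⟩ := Nat.exists_eq_add_of_le hi
    simp only [bdigit, pow_add, ← Nat.div_div_eq_div_mul, hkl j]
  let H : Fin s → Fin β → ℕ := fun j i => ((Finset.range (f j)).filter fun r => r % β = i.1).card
  have hH : ∀ j, ∑ i, H j i = f j := by
    intro j
    have := Finset.card_eq_sum_card_fiberwise (s := Finset.range (f j))
      (t := (Finset.univ : Finset (Fin β))) (f := fun p => ⟨p % β, Nat.mod_lt _ hβ⟩)
      (fun _ _ => Finset.mem_coe.mpr (Finset.mem_univ _))
    rw [Finset.card_range] at this
    rw [this]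
    simp [H, Fin.ext_iff]
  have hz := rows_indep hβ hw βe hdist H (by simpa only [hH] using hf)
    (fun j r => trv b (β * (g * w)) (k j) r - trv b (β * (g * w)) (l j) r) ?_ ?_
  · funext j
    refine eq_of_bdigit_eq hb fun i => ?_
    by_cases hi : f j ≤ i
    · exact hdig j i hi
    · have h1 : f j ≤ ∑ j, f j := Finset.single_le_sum (fun _ _ => Nat.zero_le _)
        (Finset.mem_univ j)
      have h2 : g * w ≤ β * (g * w) := Nat.le_mul_of_pos_left _ hβ
      have := hz j ⟨i, by omega⟩
      exact zmod_bdigit_inj hb (sub_eq_zero.mp this)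
  · intro j r hr
    have hrf : r.1 < f j := by
      by_contra! hle
      exact hr (by simp [trv, hdig j r.1 hle])
    have : (Finset.range (r.1 / β + 1)).card ≤ H j ⟨r.1 % β, Nat.mod_lt _ hβ⟩ := by
      refine Finset.card_le_card_of_injOn (fun h => β * h + r.1 % β) (fun h hh => ?_) ?_
      · have hh' : h < r.1 / β + 1 := by simpa using hh
        have h1 : β * h ≤ β * (r.1 / β) := Nat.mul_le_mul_left β (by omega)
        have h2 := Nat.div_add_mod r.1 β
        simp only [Finset.coe_filter, Finset.mem_range, Set.mem_ofPred_eq]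
        refine ⟨by omega, ?_⟩
        rw [Nat.mul_add_mod, Nat.mod_mod]
      · intro h _ h' _ he
        exact Nat.eq_of_mul_eq_mul_left hβ (by simpa using he)
    rw [Finset.card_range] at this
    exact this
  · have e : ∀ j, ((interlace β s (g * w) fun j => csMatrix b w (g * w) (βe j.1)) j).transpose.mulVec
        (fun r => trv b (β * (g * w)) (k j) r - trv b (β * (g * w)) (l j) r) =
        ((interlace β s (g * w) fun j => csMatrix b w (g * w) (βe j.1)) j).transpose.mulVec
          (trv b (β * (g * w)) (k j)) -
        ((interlace β s (g * w) fun j => csMatrix b w (g * w) (βe j.1)) j).transpose.mulVec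
          (trv b (β * (g * w)) (l j)) := fun j => Matrix.mulVec_sub _ _ _
    simp_rw [e, Finset.sum_sub_distrib]
    have h1 := hk
    have h2 := hl
    simp only [dualNetInf, Set.mem_ofPred_eq] at h1 h2
    rw [h1, h2, sub_zero]

lemma exists_sub_sum {s : ℕ} (F : Fin s → ℕ) (M : ℕ) :
    ∃ f : Fin s → ℕ, (∀ j, f j ≤ F j) ∧ ∑ j, f j ≤ M ∧ ∑ j, (F j - f j) = ∑ j, F j - M := by
  induction M with
  | zero => exact ⟨0, by simp⟩
  | succ M ih =>
    obtain ⟨f, h1, h2, h3⟩ := ih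
    by_cases h : ∃ j, f j < F j
    · obtain ⟨j, hj⟩ := h
      refine ⟨Function.update f j (f j + 1), fun i => ?_, ?_, ?_⟩
      · by_cases hi : i = j
        · subst hi; simpa using hj
        · simpa [hi] using h1 i
      · rw [Finset.sum_update_of_mem (Finset.mem_univ j)]
        rw [← Finset.add_sum_erase _ _ (Finset.mem_univ j), Finset.erase_eq] at h2
        omega
      · have e : ∑ i, (F i - f i) = (∑ i, (F i - Function.update f j (f j + 1) i)) + 1 := by
          rw [← Finset.add_sum_erase _ _ (Finset.mem_univ j),
            ← Finset.add_sum_erase (f := fun i => F i - Function.update f j (f j + 1) i) _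
              (Finset.mem_univ j)]
          rw [Finset.sum_congr rfl (g := fun i => F i - f i) (s₁ := Finset.univ.erase j)
            (f := fun i => F i - Function.update f j (f j + 1) i)
            (fun i hi => by simp [Finset.ne_of_mem_erase hi])]
          simp only [Function.update_self]
          omega
        omega
    · push Not at h
      refine ⟨f, h1, by omega, ?_⟩
      have e : ∑ i, (F i - f i) = 0 := Finset.sum_eq_zero fun i _ => by
        have := h i; omega
      omega

/-- Number of dual net elements in a `b`-adic elementary box. -/
lemma dual_count (hβ : 0 < β) (hw : 0 < w) (βe : ℕ → ℕ → ZMod b)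
    (hdist : ∀ j l j' l', j < β * s → l < g → j' < β * s → l' < g →
      βe j l = βe j' l' → j = j' ∧ l = l')
    (F q : Fin s → ℕ) (E : Finset (Fin s → ℕ))
    (hE : ∀ l ∈ E, l ∈ dualNetInf b
      (interlace β s (g * w) fun j => csMatrix b w (g * w) (βe j.1)))
    (hq : ∀ l ∈ E, ∀ j, l j / b ^ F j = q j) : E.card ≤ b ^ (∑ j, F j - g * w) := by
  classical
  have hb : 2 ≤ b := (Fact.out : b.Prime).two_le
  obtain ⟨f, h1, h2, h3⟩ := exists_sub_sum F (g * w)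
  have hcard : (Fintype.piFinset fun j => Finset.Ico (q j * b ^ (F j - f j))
      ((q j + 1) * b ^ (F j - f j))).card = b ^ (∑ j, F j - g * w) := by
    rw [Fintype.card_piFinset, ← h3, ← Finset.prod_pow_eq_pow_sum]
    refine Finset.prod_congr rfl fun j _ => ?_
    rw [Nat.card_Ico, ← Nat.sub_mul]; simp
  rw [← hcard]
  refine Finset.card_le_card_of_injOn (fun l j => l j / b ^ f j) (fun l hl => ?_) ?_
  · simp only [Fintype.coe_piFinset, Set.mem_pi, Finset.coe_Ico, Set.mem_Ico]
    intro j _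
    have hp : 0 < b ^ (F j - f j) := by positivity
    have : l j / b ^ f j / b ^ (F j - f j) = q j := by
      rw [Nat.div_div_eq_div_mul, ← pow_add, Nat.add_sub_cancel' (h1 j), hq l hl j]
    rw [Nat.div_eq_iff hp] at this
    rw [add_mul, one_mul]
    omega
  · intro k hk l hl he
    exact dual_inj hβ hw βe hdist f h2 k l (hE k hk) (hE l hl) fun j => congrFun he j

end Dual

/-! ### Sums of `b^{-μ_α(k)}` over all frequencies -/

/-- The sum of `b^{-μ_α(k)}` over `0 ≤ k < b^n`. -/
noncomputable def wtSum (b α n : ℕ) : ℝ := ∑ k ∈ Finset.range (b ^ n), wt b α k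

lemma sum_range_blocks (f : ℕ → ℝ) (c m : ℕ) : ∑ k ∈ Finset.range (c * m), f k =
    ∑ d ∈ Finset.range c, ∑ k ∈ Finset.range m, f (d * m + k) := by
  induction c with
  | zero => simp
  | succ c ih => rw [Nat.succ_mul, Finset.sum_range_add, ih, Finset.sum_range_succ]

lemma wtSum_succ {b : ℕ} (hb : 2 ≤ b) (α n : ℕ) : wtSum b (α + 1) (n + 1) =
    wtSum b (α + 1) n + (((b : ℝ) ^ n)⁻¹ - ((b : ℝ) ^ (n + 1))⁻¹) * wtSum b α n := by
  have hb0 : (b : ℝ) ≠ 0 := by positivity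
  obtain ⟨c, rfl⟩ : ∃ c, b = c + 1 := ⟨b - 1, by omega⟩
  have h : ∀ d ∈ Finset.range c, ∑ k ∈ Finset.range ((c + 1) ^ n),
      wt (c + 1) (α + 1) ((d + 1) * (c + 1) ^ n + k) =
      (((c + 1 : ℕ) : ℝ) ^ (n + 1))⁻¹ * wtSum (c + 1) α n := by
    intro d hd
    rw [wtSum, Finset.mul_sum]
    refine Finset.sum_congr rfl fun k hk => ?_
    rw [wt, wt, dick_top α hb (Nat.succ_pos d) (by simpa using hd) (Finset.mem_range.mp hk),
      pow_add, mul_inv]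
  rw [wtSum, pow_succ', sum_range_blocks, Finset.sum_range_succ', Finset.sum_congr rfl h]
  simp only [Finset.sum_const, Finset.card_range, nsmul_eq_mul, zero_mul, zero_add]
  rw [← wtSum, add_comm]
  congr 1
  field_simp
  push_cast
  ring

lemma wtSum_mono {b : ℕ} (hb : 2 ≤ b) (α : ℕ) : Monotone (wtSum b α) := by
  intro m n h
  refine Finset.sum_le_sum_of_subset_of_nonneg ?_ fun _ _ _ => wt_nonneg _ _ _
  exact Finset.range_mono (Nat.pow_le_pow_right (by omega) h)

lemma wtSum_zero_right (b α : ℕ) : wtSum b α 0 = 1 := by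
  simp [wtSum, wt, dick_zero_right]

lemma wtSum_zero_left (b n : ℕ) : wtSum b 0 n = (b : ℝ) ^ n := by
  simp [wtSum, wt, dick_zero_left]

lemma wtSum_nonneg (b α n : ℕ) : 0 ≤ wtSum b α n :=
  Finset.sum_nonneg fun _ _ => wt_nonneg _ _ _

lemma wtSum_tail {b : ℕ} (hb : 2 ≤ b) {α : ℕ} {C : ℝ} (hC : ∀ n, wtSum b α n ≤ C) (A d : ℕ) :
    wtSum b (α + 1) (A + d) ≤
      wtSum b (α + 1) A + C * (((b : ℝ) ^ A)⁻¹ - ((b : ℝ) ^ (A + d))⁻¹) := by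
  induction d with
  | zero => simp
  | succ d ih =>
    rw [← Nat.add_assoc, wtSum_succ hb]
    have h1 : ((b : ℝ) ^ (A + d + 1))⁻¹ ≤ ((b : ℝ) ^ (A + d))⁻¹ :=
      inv_anti₀ (by positivity) (pow_le_pow_right₀ (by exact_mod_cast (by omega : 1 ≤ b))
        (Nat.le_succ _))
    have h2 := mul_le_mul_of_nonneg_left (hC (A + d)) (sub_nonneg.mpr h1)
    linarith

lemma wtSum_one {b : ℕ} (hb : 2 ≤ b) (n : ℕ) : wtSum b 1 n ≤ 1 + n := by
  induction n with
  | zero => simp [wtSum_zero_right]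
  | succ n ih =>
    rw [wtSum_succ hb 0, wtSum_zero_left, sub_mul, inv_mul_cancel₀ (by positivity)]
    have : 0 ≤ ((b : ℝ) ^ (n + 1))⁻¹ * (b : ℝ) ^ n := by positivity
    push_cast
    linarith

lemma wtSum_two {b : ℕ} (hb : 2 ≤ b) (n : ℕ) : wtSum b 2 n ≤ 5 - (2 * n + 4) / 2 ^ n := by
  induction n with
  | zero => rw [wtSum_zero_right]; norm_num
  | succ n ih =>
    rw [wtSum_succ hb 1]
    have h1 : ((b : ℝ) ^ n)⁻¹ - ((b : ℝ) ^ (n + 1))⁻¹ ≤ ((2 : ℝ) ^ n)⁻¹ := by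
      have : ((b : ℝ) ^ n)⁻¹ ≤ ((2 : ℝ) ^ n)⁻¹ :=
        inv_anti₀ (by positivity) (pow_le_pow_left₀ (by norm_num) (by exact_mod_cast hb) _)
      have h0 : 0 ≤ ((b : ℝ) ^ (n + 1))⁻¹ := by positivity
      linarith
    have h2 : (((b : ℝ) ^ n)⁻¹ - ((b : ℝ) ^ (n + 1))⁻¹) * wtSum b 1 n ≤
        ((2 : ℝ) ^ n)⁻¹ * (1 + n) :=
      mul_le_mul h1 (wtSum_one hb n) (wtSum_nonneg _ _ _) (by positivity)
    refine (add_le_add ih h2).trans (le_of_eq ?_)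
    push_cast
    field_simp
    ring

lemma wtSum_bdd {b : ℕ} (hb : 2 ≤ b) (α : ℕ) : ∃ C : ℝ, 1 ≤ C ∧ ∀ n, wtSum b (α + 2) n ≤ C := by
  induction α with
  | zero =>
    refine ⟨5, by norm_num, fun n => (wtSum_two hb n).trans ?_⟩
    have : (0 : ℝ) ≤ (2 * n + 4) / 2 ^ n := by positivity
    linarith
  | succ α ih =>
    obtain ⟨C, hC1, hC⟩ := ih
    refine ⟨1 + C, by linarith, fun n => ?_⟩
    have h := wtSum_tail hb hC 0 n
    rw [wtSum_zero_right, zero_add] at h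
    have h0 : 0 ≤ C * ((b : ℝ) ^ n)⁻¹ := by positivity
    simp only [pow_zero, inv_one] at h
    refine h.trans ?_
    linarith

lemma pow_sub_le {x y C : ℝ} (hy : 0 ≤ y) (hyx : y ≤ x) (hx : x ≤ C) (hC : 1 ≤ C) (s : ℕ) :
    x ^ s - y ^ s ≤ s * C ^ s * (x - y) := by
  induction s with
  | zero => simp
  | succ s ih =>
    have e : x ^ (s + 1) - y ^ (s + 1) = x * (x ^ s - y ^ s) + y ^ s * (x - y) := by ring
    have hd : 0 ≤ x - y := by linarith
    have h1 : x * (x ^ s - y ^ s) ≤ C * (s * C ^ s * (x - y)) :=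
      mul_le_mul hx ih (sub_nonneg.mpr (pow_le_pow_left₀ hy hyx s)) (by linarith)
    have h2 : y ^ s ≤ C ^ (s + 1) :=
      (pow_le_pow_left₀ hy (hyx.trans hx) s).trans (pow_le_pow_right₀ hC (Nat.le_succ s))
    have h3 := mul_le_mul_of_nonneg_right h2 hd
    rw [e]
    push_cast
    refine (add_le_add h1 h3).trans (le_of_eq ?_)
    ring

/-- For `α ≥ 3`, the weights outside the box `{0,…,b^A-1}^s` sum to `O(b^{-A})`. -/
lemma k_sum {b : ℕ} (hb : 2 ≤ b) {α : ℕ} (hα : 3 ≤ α) (s : ℕ) : ∃ C : ℝ, 0 ≤ C ∧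
    ∀ (A : ℕ) (E : Finset (Fin s → ℕ)), (∀ k ∈ E, ¬ ∀ j, k j < b ^ A) →
      ∑ k ∈ E, ∏ j, wt b α (k j) ≤ C * ((b : ℝ) ^ A)⁻¹ := by
  classical
  obtain ⟨a, rfl⟩ : ∃ a, α = a + 2 + 1 := ⟨α - 3, by omega⟩
  obtain ⟨C, hC1, hC⟩ := wtSum_bdd hb a
  obtain ⟨C', hC1', hC'⟩ := wtSum_bdd hb (a + 1)
  refine ⟨s * C' ^ s * C, by positivity, fun A E hE => ?_⟩
  let d := ∑ k ∈ E, ∑ j, k j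
  have hbox : ∀ n, ∑ k ∈ Fintype.piFinset (fun _ : Fin s => Finset.range (b ^ n)),
      ∏ j, wt b (a + 2 + 1) (k j) = wtSum b (a + 2 + 1) n ^ s := by
    intro n
    rw [← Finset.prod_univ_sum]
    simp [wtSum]
  have hsub : Fintype.piFinset (fun _ : Fin s => Finset.range (b ^ A)) ⊆
      Fintype.piFinset (fun _ : Fin s => Finset.range (b ^ (A + d))) :=
    Fintype.piFinset_subset _ _ fun _ =>
      Finset.range_mono (Nat.pow_le_pow_right (by omega) (Nat.le_add_right _ _))
  have hE' : E ⊆ Fintype.piFinset (fun _ : Fin s => Finset.range (b ^ (A + d))) \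
      Fintype.piFinset (fun _ : Fin s => Finset.range (b ^ A)) := by
    intro k hk
    rw [Finset.mem_sdiff]
    refine ⟨?_, by simpa using hE k hk⟩
    simp only [Fintype.mem_piFinset, Finset.mem_range]
    intro j
    have h1 : k j ≤ ∑ j, k j := Finset.single_le_sum (fun _ _ => Nat.zero_le _) (Finset.mem_univ j)
    have h2 : ∑ j, k j ≤ d := Finset.single_le_sum (f := fun k : Fin s → ℕ => ∑ j, k j)
      (fun _ _ => Nat.zero_le _) hk
    exact (Nat.lt_pow_self (by omega : 1 < b)).trans_le (Nat.pow_le_pow_right (by omega) (by omega))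
  have hsd := Finset.sum_sdiff hsub (f := fun k : Fin s → ℕ => ∏ j, wt b (a + 2 + 1) (k j))
  rw [hbox, hbox] at hsd
  have htail : wtSum b (a + 2 + 1) (A + d) - wtSum b (a + 2 + 1) A ≤ C * ((b : ℝ) ^ A)⁻¹ := by
    have := wtSum_tail hb hC A d
    have h0 : 0 ≤ C * ((b : ℝ) ^ (A + d))⁻¹ := by positivity
    linarith
  calc ∑ k ∈ E, ∏ j, wt b (a + 2 + 1) (k j)
      ≤ ∑ k ∈ Fintype.piFinset (fun _ : Fin s => Finset.range (b ^ (A + d))) \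
          Fintype.piFinset (fun _ : Fin s => Finset.range (b ^ A)),
          ∏ j, wt b (a + 2 + 1) (k j) :=
        Finset.sum_le_sum_of_subset_of_nonneg hE' fun _ _ _ =>
          Finset.prod_nonneg fun _ _ => wt_nonneg _ _ _
    _ = wtSum b (a + 2 + 1) (A + d) ^ s - wtSum b (a + 2 + 1) A ^ s := by linarith
    _ ≤ s * C' ^ s * (wtSum b (a + 2 + 1) (A + d) - wtSum b (a + 2 + 1) A) :=
        pow_sub_le (wtSum_nonneg _ _ _) (wtSum_mono hb _ (Nat.le_add_right _ _)) (hC' _) hC1' s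
    _ ≤ s * C' ^ s * (C * ((b : ℝ) ^ A)⁻¹) := mul_le_mul_of_nonneg_left htail (by positivity)
    _ = _ := by ring

/-! ### Sum of `b^{-μ_α(l)}` over the dual net -/

/-- Finite set containing all pairs `(F, k / b^F)` for `k < b^T`, where `F` is the position of the
`(a+1)`-st nonzero digit of `k` from the top (and `F = 0` when there are fewer nonzero digits). -/
def keySet (b : ℕ) : ℕ → ℕ → Finset (ℕ × ℕ)
  | 0, T => insert (0, 0) (Finset.range T ×ˢ Finset.range b)
  | a + 1, T => insert (0, 0)
      (((Finset.range T ×ˢ Finset.range b) ×ˢ keySet b a T).image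
        fun x => (x.2.1, x.1.2 * b ^ (x.1.1 - x.2.1) + x.2.2))

lemma card_keySet (b a T : ℕ) : (keySet b a T).card ≤ (1 + b * T) ^ (a + 1) := by
  induction a with
  | zero =>
    refine (Finset.card_insert_le _ _).trans (le_of_eq ?_)
    simp; ring
  | succ a ih =>
    refine (Finset.card_insert_le _ _).trans ?_
    have h1 : (((Finset.range T ×ˢ Finset.range b) ×ˢ keySet b a T).image
        fun x : (ℕ × ℕ) × ℕ × ℕ => (x.2.1, x.1.2 * b ^ (x.1.1 - x.2.1) + x.2.2)).card ≤
        b * T * (1 + b * T) ^ (a + 1) := by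
      refine Finset.card_image_le.trans ?_
      rw [Finset.card_product, Finset.card_product, Finset.card_range, Finset.card_range,
        mul_comm T b]
      exact Nat.mul_le_mul_left _ ih
    have h2 : 1 ≤ (1 + b * T) ^ (a + 1) := Nat.one_le_pow _ _ (by omega)
    rw [pow_succ _ (a + 1), mul_add, mul_one, mul_comm _ (b * T)]
    omega

/-- The position `F` of the `(a+1)`-st nonzero digit from the top: below it the digits do not
influence `μ_{a+1}`, and above it `k` is described by at most `a+1` position-digit pairs. -/
lemma exists_top_pos {b : ℕ} (hb : 2 ≤ b) (a : ℕ) : ∀ k, ∃ F,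
    (∀ T, k < b ^ T → (F, k / b ^ F) ∈ keySet b a T ∧ F ≤ T) ∧
    (a + 1) * F ≤ dick b (a + 1) k ∧
    (1 ≤ a → ∃ n, k < b ^ n ∧ n + F ≤ dick b (a + 1) k) := by
  induction a with
  | zero =>
    intro k
    rcases Nat.eq_zero_or_pos k with rfl | hk0
    · exact ⟨0, fun T _ => by simp [keySet], by simp, by simp⟩
    · obtain ⟨m, c, k', hc0, hc, hk', rfl⟩ := exists_top hb hk0.ne'
      refine ⟨m, fun T hT => ?_, ?_, by simp⟩
      · have hm := top_lt hb hc0 hT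
        have : (c * b ^ m + k') / b ^ m = c := by
          rw [mul_comm, Nat.mul_add_div (by positivity), Nat.div_eq_of_lt hk', add_zero]
        rw [this]
        refine ⟨?_, hm.le⟩
        simp [keySet, hm, hc]
      · rw [dick_top 0 hb hc0 hc hk']; omega
  | succ a ih =>
    intro k
    rcases Nat.eq_zero_or_pos k with rfl | hk0
    · exact ⟨0, fun T _ => by simp [keySet], by simp, fun _ => ⟨0, by simp, by simp⟩⟩
    · obtain ⟨m, c, k', hc0, hc, hk', rfl⟩ := exists_top hb hk0.ne'
      obtain ⟨F, h1, h2, -⟩ := ih k'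
      have hFm := (h1 m hk').2
      refine ⟨F, fun T hT => ?_, ?_, fun _ => ⟨m + 1, ?_, ?_⟩⟩
      · have hm := top_lt hb hc0 hT
        have h3 := h1 T (hk'.trans_le (Nat.pow_le_pow_right (by omega) hm.le))
        refine ⟨?_, h3.2⟩
        have : (c * b ^ m + k') / b ^ F = c * b ^ (m - F) + k' / b ^ F := by
          conv_lhs => rw [← Nat.add_sub_cancel' hFm, pow_add, mul_left_comm]
          rw [Nat.mul_add_div (by positivity)]
        rw [this]
        refine Finset.mem_insert_of_mem (Finset.mem_image.mpr ⟨((m, c), (F, k' / b ^ F)), ?_, rfl⟩)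
        simp [hm, hc, h3.1]
      · rw [dick_top (a + 1) hb hc0 hc hk', Nat.succ_mul]; omega
      · rw [pow_succ']
        have : (c + 1) * b ^ m ≤ b * b ^ m := Nat.mul_le_mul_right _ hc
        nlinarith
      · rw [dick_top (a + 1) hb hc0 hc hk']
        have : F ≤ (a + 1) * F := Nat.le_mul_of_pos_left _ (Nat.succ_pos a)
        omega

lemma summable_aux {b : ℕ} (hb : 2 ≤ b) (n : ℕ) :
    Summable fun t : ℕ => (1 + b * t : ℝ) ^ n * ((b : ℝ) ^ t)⁻¹ := by
  have hb' : (2 : ℝ) ≤ b := by exact_mod_cast hb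
  have h := summable_pow_mul_geometric_of_norm_lt_one (R := ℝ) n (r := (b : ℝ)⁻¹)
    (by rw [norm_inv, Real.norm_natCast]; exact inv_lt_one_of_one_lt₀ (by linarith))
  have h1 := ((summable_nat_add_iff 1).mpr h).mul_left ((b : ℝ) ^ n * b)
  refine Summable.of_nonneg_of_le (fun t => by positivity) (fun t => ?_) h1
  have h2 : (1 + b * t : ℝ) ^ n ≤ (b * (t + 1)) ^ n :=
    pow_le_pow_left₀ (by positivity) (by linarith) n
  have h3 := mul_le_mul_of_nonneg_right h2 (by positivity : 0 ≤ ((b : ℝ) ^ t)⁻¹)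
  refine h3.trans (le_of_eq ?_)
  rw [mul_pow]
  push_cast
  rw [inv_pow, pow_succ _ t]
  field_simp

/-- Tails of `∑ (1+bT)^n b^{-T}` are dominated by their first term. -/
lemma tail_sum {b : ℕ} (hb : 2 ≤ b) (n : ℕ) : ∃ Z : ℝ, 0 ≤ Z ∧
    ∀ (T0 : ℕ) (I : Finset ℕ), (∀ T ∈ I, T0 ≤ T) →
      ∑ T ∈ I, (1 + b * T : ℝ) ^ n * ((b : ℝ) ^ T)⁻¹ ≤
        Z * ((1 + b * T0 : ℝ) ^ n * ((b : ℝ) ^ T0)⁻¹) := by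
  classical
  refine ⟨∑' t : ℕ, (1 + b * t : ℝ) ^ n * ((b : ℝ) ^ t)⁻¹, tsum_nonneg fun t => by positivity,
    fun T0 I hI => ?_⟩
  have h1 : ∑ T ∈ I, (1 + b * T : ℝ) ^ n * ((b : ℝ) ^ T)⁻¹ ≤
      ∑ T ∈ I, ((1 + b * (T - T0 : ℕ) : ℝ) ^ n * ((b : ℝ) ^ (T - T0))⁻¹) *
        ((1 + b * T0 : ℝ) ^ n * ((b : ℝ) ^ T0)⁻¹) := by
    refine Finset.sum_le_sum fun T hT => ?_
    obtain ⟨t, rfl⟩ := Nat.exists_eq_add_of_le (hI T hT)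
    rw [Nat.add_sub_cancel_left]
    have h2 : (1 + b * (T0 + t : ℕ) : ℝ) ≤ (1 + b * t) * (1 + b * T0) := by
      push_cast
      have : (0 : ℝ) ≤ b * t * (b * T0) := by positivity
      nlinarith
    have h3 := pow_le_pow_left₀ (by positivity) h2 n
    have h4 := mul_le_mul_of_nonneg_right h3 (by positivity : 0 ≤ ((b : ℝ) ^ (T0 + t))⁻¹)
    refine h4.trans (le_of_eq ?_)
    rw [pow_add, mul_inv, mul_pow]; ring
  refine h1.trans ?_
  rw [← Finset.sum_mul]
  refine mul_le_mul_of_nonneg_right ?_ (by positivity)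
  have hinj : Set.InjOn (fun T => T - T0) (I : Set ℕ) := by
    intro T hT T' hT' h
    have h1 := hI T hT
    have h2 := hI T' hT'
    simp only at h
    omega
  rw [← Finset.sum_image (f := fun t : ℕ => (1 + b * t : ℝ) ^ n * ((b : ℝ) ^ t)⁻¹)
    (g := fun T => T - T0) hinj]
  exact (summable_aux hb n).sum_le_tsum _ fun t _ => by positivity

/-- The weights over the nonzero dual net sum to `O(m^{sα} b^{-αm})` with `m = gw`. Elements are
grouped by their `α` leading digits in each coordinate: a group whose free digits number `Φ` has at
most `b^{(Φ-m)_+}` elements, and the reduced weight `W = μ_α - (Φ-m)_+` is at least `αm - O(1)`. -/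
lemma l_sum {b s β g : ℕ} [Fact b.Prime] {α : ℕ} (hα : 2 ≤ α) (hαβ : α ≤ β)
    (hg : 0 < g) (βe : ℕ → ℕ → ZMod b)
    (hdist : ∀ j l j' l', j < β * s → l < g → j' < β * s → l' < g →
      βe j l = βe j' l' → j = j' ∧ l = l') : ∃ C : ℝ, 0 ≤ C ∧ ∀ w, 0 < w →
    ∀ E : Finset (Fin s → ℕ), (∀ l ∈ E, l ∈ dualNetInf b
        (interlace β s (g * w) fun j => csMatrix b w (g * w) (βe j.1)) ∧ l ≠ 0) →
      ∑ l ∈ E, ∏ j, wt b α (l j) ≤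
        C * ((g * w : ℕ) : ℝ) ^ (s * α) * ((b : ℝ) ^ (α * (g * w)))⁻¹ := by
  classical
  have hb : 2 ≤ b := (Fact.out : b.Prime).two_le
  have hb1 : (1 : ℝ) ≤ b := by exact_mod_cast (by omega : 1 ≤ b)
  obtain ⟨a, rfl⟩ : ∃ a, α = a + 1 := ⟨α - 1, by omega⟩
  choose F hF1 hF2 hF3 using exists_top_pos hb a
  obtain ⟨Z, hZ, htail⟩ := tail_sum hb (s * (a + 1))
  set c := s * ((a + 1) * β) with hc
  refine ⟨Z * (2 * b * (a + 1)) ^ (s * (a + 1)) * (b : ℝ) ^ c, by positivity, fun w hw E hE => ?_⟩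
  set M := g * w with hM
  have hM1 : 1 ≤ M := Nat.mul_pos hg hw
  let Φ : (Fin s → ℕ) → ℕ := fun l => ∑ j, F (l j)
  let W : (Fin s → ℕ) → ℕ := fun l => dickVec b (a + 1) l - (Φ l - M)
  have hΦ : ∀ l, (a + 1) * Φ l ≤ dickVec b (a + 1) l := fun l => by
    simp only [Φ, dickVec, Finset.mul_sum]
    exact Finset.sum_le_sum fun j _ => hF2 (l j)
  have hΦ' : ∀ l, Φ l ≤ dickVec b (a + 1) l := fun l =>
    (Nat.le_mul_of_pos_left _ (Nat.succ_pos a)).trans (hΦ l)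
  have hWμ : ∀ l, dickVec b (a + 1) l = W l + (Φ l - M) := fun l => by
    have := hΦ' l
    simp only [W]; omega
  have hW1 : ∀ l ∈ E, (a + 1) * M - c ≤ W l := by
    intro l hl
    rcases le_total (Φ l) M with h | h
    · have h1 : (a + 1) * M ≤ dickVec b (a + 1) l + c :=
        dual_dick_ge (by omega) hw (by omega : 1 ≤ a + 1) hαβ βe hdist l (hE l hl).1 (hE l hl).2
      simp only [W]; omega
    · have h1 := hΦ l
      have h2 : a * M ≤ a * Φ l := Nat.mul_le_mul_left a h
      rw [Nat.succ_mul] at h1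
      rw [Nat.succ_mul]
      simp only [W]; omega
  have hW2 : ∀ l j, l j < b ^ W l := by
    intro l j
    obtain ⟨n, hn, hn'⟩ := hF3 (l j) (by omega)
    refine hn.trans_le (Nat.pow_le_pow_right (by omega) ?_)
    have h1 : n + Φ l ≤ dickVec b (a + 1) l := by
      simp only [Φ, dickVec]
      rw [← Finset.add_sum_erase _ _ (Finset.mem_univ j),
        ← Finset.add_sum_erase (f := fun j => dick b (a + 1) (l j)) _ (Finset.mem_univ j)]
      have : ∑ i ∈ Finset.univ.erase j, F (l i) ≤
          ∑ i ∈ Finset.univ.erase j, dick b (a + 1) (l i) :=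
        Finset.sum_le_sum fun i _ =>
          (Nat.le_mul_of_pos_left _ (Nat.succ_pos a)).trans (hF2 (l i))
      omega
    simp only [W]; omega
  let key : (Fin s → ℕ) → Fin s → ℕ × ℕ := fun l j => (F (l j), l j / b ^ F (l j))
  have hgroup : ∀ T, ∑ l ∈ E.filter (fun l => W l = T), ∏ j, wt b (a + 1) (l j) ≤
      (1 + b * T : ℝ) ^ (s * (a + 1)) * ((b : ℝ) ^ T)⁻¹ := by
    intro T
    have hmaps : ∀ l ∈ E.filter (fun l => W l = T),
        key l ∈ Fintype.piFinset fun _ : Fin s => keySet b a T := by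
      intro l hl
      rw [Fintype.mem_piFinset]
      intro j
      have h := hW2 l j
      rw [(Finset.mem_filter.mp hl).2] at h
      exact (hF1 (l j) T h).1
    rw [← Finset.sum_fiberwise_of_maps_to hmaps]
    have hfib : ∀ φ ∈ Fintype.piFinset fun _ : Fin s => keySet b a T,
        ∑ l ∈ (E.filter fun l => W l = T).filter (fun l => key l = φ), ∏ j, wt b (a + 1) (l j) ≤
          ((b : ℝ) ^ T)⁻¹ := by
      intro φ _
      have hcount := dual_count (by omega) hw βe hdist (fun j => (φ j).1) (fun j => (φ j).2)
        ((E.filter fun l => W l = T).filter fun l => key l = φ)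
        (fun l hl => (hE l (Finset.mem_filter.mp (Finset.mem_filter.mp hl).1).1).1)
        (fun l hl j => by
          have := congrFun (Finset.mem_filter.mp hl).2 j
          rw [← this])
      have hterm : ∀ l ∈ (E.filter fun l => W l = T).filter (fun l => key l = φ),
          ∏ j, wt b (a + 1) (l j) = ((b : ℝ) ^ T)⁻¹ * ((b : ℝ) ^ (∑ j, (φ j).1 - M))⁻¹ := by
        intro l hl
        have h1 := (Finset.mem_filter.mp (Finset.mem_filter.mp hl).1).2
        have h2 : Φ l = ∑ j, (φ j).1 := by
          rw [← (Finset.mem_filter.mp hl).2]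
        simp only [wt]
        rw [Finset.prod_inv_distrib, Finset.prod_pow_eq_pow_sum]
        have h3 := hWμ l
        rw [h1, h2] at h3
        rw [← mul_inv, ← pow_add, ← h3]
        rfl
      rw [Finset.sum_congr rfl hterm, Finset.sum_const, nsmul_eq_mul]
      have hc' : (((E.filter fun l => W l = T).filter fun l => key l = φ).card : ℝ) ≤
          (b : ℝ) ^ (∑ j, (φ j).1 - M) := by exact_mod_cast hcount
      calc _ ≤ (b : ℝ) ^ (∑ j, (φ j).1 - M) *
            (((b : ℝ) ^ T)⁻¹ * ((b : ℝ) ^ (∑ j, (φ j).1 - M))⁻¹) :=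
            mul_le_mul_of_nonneg_right hc' (by positivity)
        _ = ((b : ℝ) ^ T)⁻¹ := by
            have : (b : ℝ) ^ (∑ j, (φ j).1 - M) ≠ 0 := by positivity
            field_simp
    refine (Finset.sum_le_sum hfib).trans ?_
    rw [Finset.sum_const, nsmul_eq_mul]
    refine mul_le_mul_of_nonneg_right ?_ (by positivity)
    have h1 : (Fintype.piFinset fun _ : Fin s => keySet b a T).card ≤
        (1 + b * T) ^ (s * (a + 1)) := by
      rw [Fintype.card_piFinset_const, mul_comm s, pow_mul]
      exact Nat.pow_le_pow_left (card_keySet b a T) _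
    exact_mod_cast h1
  rw [← Finset.sum_fiberwise_of_maps_to (s := E) (t := E.image W) (g := W)
    fun l hl => Finset.mem_image_of_mem W hl]
  refine (Finset.sum_le_sum fun T _ => hgroup T).trans ?_
  refine (htail ((a + 1) * M - c) (E.image W) fun T hT => ?_).trans ?_
  · obtain ⟨l, hl, rfl⟩ := Finset.mem_image.mp hT
    exact hW1 l hl
  · have hM1' : (1 : ℝ) ≤ M := by exact_mod_cast hM1
    have h1 : (1 + b * ((a + 1) * M - c : ℕ) : ℝ) ^ (s * (a + 1)) ≤
        (2 * b * (a + 1) * M) ^ (s * (a + 1)) := by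
      refine pow_le_pow_left₀ (by positivity) ?_ _
      have h2 : (((a + 1) * M - c : ℕ) : ℝ) ≤ (a + 1) * M := by
        have : (((a + 1) * M - c : ℕ) : ℝ) ≤ (((a + 1) * M : ℕ) : ℝ) := by
          exact_mod_cast Nat.sub_le _ _
        exact_mod_cast this
      have h3 : (1 : ℝ) ≤ b * ((a + 1) * M) := by
        have h4 : (1 : ℝ) ≤ (a : ℝ) + 1 := by
          have : (0 : ℝ) ≤ a := by positivity
          linarith
        exact one_le_mul_of_one_le_of_one_le hb1 (one_le_mul_of_one_le_of_one_le h4 hM1')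
      have h5 := mul_le_mul_of_nonneg_left h2 (by linarith : (0 : ℝ) ≤ b)
      linarith
    have h2 : ((b : ℝ) ^ ((a + 1) * M - c))⁻¹ ≤ (b : ℝ) ^ c * ((b : ℝ) ^ ((a + 1) * M))⁻¹ := by
      rw [← div_eq_mul_inv, le_div_iff₀ (by positivity), inv_mul_le_iff₀ (by positivity), ← pow_add]
      exact pow_le_pow_right₀ hb1 (by omega)
    refine (mul_le_mul_of_nonneg_left (mul_le_mul h1 h2 (by positivity) (by positivity))
      hZ).trans (le_of_eq ?_)
    rw [mul_pow _ (M : ℝ)]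
    ring

/-! ### The bound -/

/-- Proposition 2: the discretization part, `α ≥ 3`. Under the
assumptions of the main theorem with `α ≥ 3`, there is `A > 0` such that for all `w`, the
digital net `P` of the paper's construction with `N = b^{gw}` points satisfies
`∑_{k ∉ {0,…,b^{βgw}-1}^s} ∑_{l ∈ P∞⊥\{0}} |K̂_{α,s}(k,l)| ≤ A (log N)^{sα} / N^{3α}`. -/
theorem discretization_part_bound
    (b s α β g : ℕ) (hb : b.Prime) (hs : 0 < s) (hα : 3 ≤ α) (hβ : 2 * α ≤ β)
    (hg1 : 2 * α * s ≤ g) (hg2 : s * (β - 1) / 2 ≤ g) (hbs : β * g * s ≤ b)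
    (βe : ℕ → ℕ → ZMod b)
    (hdist : ∀ j l j' l', j < β * s → l < g → j' < β * s → l' < g →
      βe j l = βe j' l' → j = j' ∧ l = l') :
    ∃ A : ℝ, 0 < A ∧ ∀ w : ℕ, 0 < w →
      (∑' p : {k : Fin s → ℕ // ¬ ∀ j, k j < b ^ (β * (g * w))} ×
          {l : Fin s → ℕ //
            l ∈ dualNetInf b (interlace β s (g * w) fun j => csMatrix b w (g * w) (βe j.1)) ∧
            l ≠ 0},
          ‖KhatS b α s p.1.1 p.2.1‖) ≤
        A * Real.log ((b : ℝ) ^ (g * w)) ^ (s * α) / ((b : ℝ) ^ (g * w)) ^ (3 * α) := by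
  have : Fact b.Prime := ⟨hb⟩
  have hb2 : 2 ≤ b := hb.two_le
  have hb1 : (1 : ℝ) ≤ b := by exact_mod_cast hb.one_lt.le
  have hg : 0 < g := lt_of_lt_of_le (by positivity) hg1
  obtain ⟨D, hD, hK⟩ := norm_KhatS_le hb2 (by omega : 1 ≤ α) s
  obtain ⟨C₁, hC₁, hk⟩ := k_sum hb2 hα s
  obtain ⟨C₂, hC₂, hl⟩ := l_sum (s := s) (by omega : 2 ≤ α) (by omega : α ≤ β) hg βe hdist
  have hlog : 0 < Real.log b := Real.log_pos (by exact_mod_cast hb.one_lt)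
  refine ⟨(D * C₁ * C₂ + 1) / Real.log b ^ (s * α), by positivity, fun w hw => ?_⟩
  classical
  set M := g * w with hM
  refine Real.tsum_le_of_sum_le (fun _ => norm_nonneg _) fun S => ?_
  -- a finite set of pairs is enlarged to the product of its projections
  set E₁ := S.image Prod.fst
  set E₂ := S.image Prod.snd
  have hS : S ⊆ E₁ ×ˢ E₂ := fun p hp => Finset.mem_product.mpr
    ⟨Finset.mem_image_of_mem _ hp, Finset.mem_image_of_mem _ hp⟩
  have h1 : ∑ k ∈ E₁, ∏ j, wt b α (k.1 j) ≤ C₁ * ((b : ℝ) ^ (β * M))⁻¹ := by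
    have := hk (β * M) (E₁.map (Function.Embedding.subtype _)) (by
      intro k hk
      obtain ⟨k', -, rfl⟩ := Finset.mem_map.mp hk
      exact k'.2)
    rwa [Finset.sum_map] at this
  have h2 : ∑ l ∈ E₂, ∏ j, wt b α (l.1 j) ≤
      C₂ * (M : ℝ) ^ (s * α) * ((b : ℝ) ^ (α * M))⁻¹ := by
    have := hl w hw (E₂.map (Function.Embedding.subtype _)) (by
      intro l hl
      obtain ⟨l', -, rfl⟩ := Finset.mem_map.mp hl
      exact l'.2)
    rwa [Finset.sum_map] at this
  have hw0 : ∀ k : Fin s → ℕ, 0 ≤ ∏ j, wt b α (k j) := fun k =>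
    Finset.prod_nonneg fun _ _ => wt_nonneg _ _ _
  have hpow : ((b : ℝ) ^ (β * M))⁻¹ * ((b : ℝ) ^ (α * M))⁻¹ ≤ ((b : ℝ) ^ (M * (3 * α)))⁻¹ := by
    rw [← mul_inv, ← pow_add]
    refine inv_anti₀ (by positivity) (pow_le_pow_right₀ hb1 ?_)
    have := Nat.mul_le_mul_right M hβ
    nlinarith
  calc ∑ p ∈ S, ‖KhatS b α s p.1.1 p.2.1‖
      ≤ ∑ p ∈ E₁ ×ˢ E₂, D * ((∏ j, wt b α (p.1.1 j)) * ∏ j, wt b α (p.2.1 j)) :=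
        (Finset.sum_le_sum fun p _ => hK p.1.1 p.2.1).trans
          (Finset.sum_le_sum_of_subset_of_nonneg hS fun p _ _ =>
            mul_nonneg hD (mul_nonneg (hw0 _) (hw0 _)))
    _ = D * ((∑ k ∈ E₁, ∏ j, wt b α (k.1 j)) * ∑ l ∈ E₂, ∏ j, wt b α (l.1 j)) := by
        rw [← Finset.mul_sum, Finset.sum_product, Finset.sum_mul_sum]
    _ ≤ D * ((C₁ * ((b : ℝ) ^ (β * M))⁻¹) *
          (C₂ * (M : ℝ) ^ (s * α) * ((b : ℝ) ^ (α * M))⁻¹)) :=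
        mul_le_mul_of_nonneg_left (mul_le_mul h1 h2 (Finset.sum_nonneg fun _ _ => hw0 _)
          (by positivity)) hD
    _ = D * C₁ * C₂ * (M : ℝ) ^ (s * α) *
          (((b : ℝ) ^ (β * M))⁻¹ * ((b : ℝ) ^ (α * M))⁻¹) := by ring
    _ ≤ (D * C₁ * C₂ + 1) * (M : ℝ) ^ (s * α) * ((b : ℝ) ^ (M * (3 * α)))⁻¹ := by
        refine mul_le_mul (mul_le_mul_of_nonneg_right (by linarith) (by positivity)) hpow
          (by positivity) (by positivity)
    _ = (D * C₁ * C₂ + 1) / Real.log b ^ (s * α) * Real.log ((b : ℝ) ^ M) ^ (s * α) /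
          ((b : ℝ) ^ M) ^ (3 * α) := by
        rw [Real.log_pow, mul_pow, ← pow_mul]
        field_simp
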